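/- arXiv:1503.07844 — 4 statements merged into one kernel-verified Lean document; each statement's English description precedes it below -/
import Mathlib

section
/- Let X be a normed linear space, let A ⊆ X be a retract of X, and let a < b be real numbers. Set C = [a,b] × A ⊆ ℝ × X, C_l = {a} × A, C_r = {b} × A. Let D ⊆ ℝ × X and let φ = (φ₁, φ₂) : D → ℝ × X be a map. Suppose there exists a closed set W ⊆ D ∩ C such that: (i) φ restricted to W is compact; (ii) for every path σ : [0,1] → ℝ × X with support contained in C and with support intersecting both C_l and C_r, there exists a sub-path γ of σ whose support is contained in W and such that φ(γ) ⊆ C, φ(γ) ∩ C_l ≠ ∅ and φ(γ) ∩ C_r ≠ ∅. Then there exists z̃ ∈ W such that φ(z̃) = z̃. -/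
/-!
The idea: a compactness argument reduces the claim to finding, for every `ε > 0`, a point `z ∈ W`
with `dist (φ z) z < ε`. Such a point is found on a path `σ` from `C_l` to `C_r` in `C` along which
`‖φ₂(z) - z₂‖ < ε` whenever `z ∈ W` and `φ₂(z) ∈ A`. On the sub-path provided by the stretching
hypothesis, `φ₁(z) - z₁` is nonpositive somewhere and nonnegative somewhere else, so it vanishes
somewhere, and there `φ(z)` is `ε`-close to `z` (`exists_dist_lt`).

The path is built in finite dimension. A Schauder projection `P` moves the points of the compact set
`K = closure φ₂(W) ∩ A` slightly, into a finite-dimensional subspace `F` of `X`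
(`exists_schauder_projection`). The map `(t, s) ↦ P (φ₂ (t, r s))`, defined on a closed subset of
`[a, b] × F`, has a bounded continuous extension `f` with values in `F` by Tietze's theorem.
It remains to join `{t ≤ a}` to `{t ≥ b}` by a path inside the open set `O = {‖f(t, s) - s‖ < η}`
(`exists_path`, an approximate form of the Leray-Schauder continuation theorem). Otherwise the
points of `O` reachable from `{t ≤ a}` form an open and relatively closed subset `U` of `O` without
points in `{t ≥ b}`, and a Urysohn function `τ` which is `b` on `U` and `a` off `U` (where
`‖f(t, s) - s‖ ≤ η / 2`) makes `(t, s) ↦ (τ(t, s), f(t, s))` a bounded map without a fixed point,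
against Brouwer's theorem.

Brouwer's theorem is proved by the volume argument of Milnor and Rogers. A Lipschitz map
`id + g`, with `g` vanishing off a ball `B` and differentiable in `B`, has `∫_B det (1 + t g') = vol B`
for small `t ≥ 0`, because `id + t g` then permutes `B`. The integrand is a polynomial in `t`, so the
identity persists at `t = 1`; but if `id + g` maps `B` to its boundary sphere then
`det (1 + g') = 0` on `B` (`no_lipschitz_retraction`). A smooth map of `B` to itself without a fixed
point would produce such a retraction, by following rays to the sphere.
-/

open Set

namespace CylinderRetract

open MeasureTheory Metric Module
open scoped NNReal

/-! ### Brouwer's fixed point theorem -/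

section Brouwer
variable {E : Type*} [NormedAddCommGroup E] [InnerProductSpace ℝ E] [FiniteDimensional ℝ E]

lemma det_ne_zero_of_norm_lt_one (A : E →L[ℝ] E) (hA : ‖A‖ < 1) :
    (1 + A).det ≠ 0 := by
  intro h
  have h1 : LinearMap.det ((1 + A : E →L[ℝ] E) : E →ₗ[ℝ] E) = 0 := h
  obtain ⟨x, hx, hx0⟩ := (Submodule.ne_bot_iff _).1 (LinearMap.bot_lt_ker_of_det_eq_zero h1).ne'
  have hx' : x + A x = 0 := by simpa using hx
  have h2 : ‖x‖ = ‖A x‖ := by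
    rw [← norm_neg (A x), ← eq_neg_of_add_eq_zero_left hx']
  have h3 := A.le_opNorm x
  have h4 : 0 < ‖x‖ := norm_pos_iff.2 hx0
  nlinarith

/-- The determinant of `1 + s A` does not vanish for `s ∈ [0, 1]` and equals `1` at `s = 0`. -/
lemma det_pos_of_norm_lt_one (A : E →L[ℝ] E) (hA : ‖A‖ < 1) :
    0 < (1 + A).det := by
  by_contra hneg
  have hc : ContinuousOn (fun s : ℝ => (1 + s • A).det) (Icc 0 1) :=
    (ContinuousLinearMap.continuous_det.comp (by fun_prop)).continuousOn
  have h0 : (1 + (0 : ℝ) • A).det = 1 := by simp [ContinuousLinearMap.det]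
  obtain ⟨s, hs, hs'⟩ := intermediate_value_Icc' zero_le_one hc
    (show (0 : ℝ) ∈ _ by rw [h0, one_smul]; exact ⟨not_lt.1 hneg, zero_le_one⟩)
  refine det_ne_zero_of_norm_lt_one (s • A) ?_ hs'
  rw [norm_smul, Real.norm_of_nonneg hs.1]
  nlinarith [hs.2, norm_nonneg A]

/-- As `s ↦ det (1 + s A)` is a polynomial of degree at most `dim E`, its value at `s = 1` is given by
Lagrange interpolation at any `dim E + 1` distinct nodes. -/
lemma det_eq_sum_interpolation (A : E →L[ℝ] E) (t : ℕ → ℝ) (ht : Function.Injective t) :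
    (1 + A).det = ∑ i ∈ Finset.range (finrank ℝ E + 1),
      (Lagrange.basis (Finset.range (finrank ℝ E + 1)) t i).eval 1 * (1 + t i • A).det := by
  let b := finBasis ℝ E
  let M := LinearMap.toMatrix b b (A : E →ₗ[ℝ] E)
  let P : Polynomial ℝ := Matrix.det ((Polynomial.X : Polynomial ℝ) • M.map Polynomial.C
    + (1 : Matrix _ _ ℝ).map Polynomial.C)
  have hP : ∀ s : ℝ, P.eval s = (1 + s • A).det := by
    intro s
    have : (1 + s • A).det = LinearMap.det ((1 : E →ₗ[ℝ] E) + s • (A : E →ₗ[ℝ] E)) := rfl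
    rw [this, ← LinearMap.det_toMatrix b, map_add, map_smul, LinearMap.toMatrix_one]
    simp only [P]
    rw [← Polynomial.coe_evalRingHom, RingHom.map_det]
    congr 1
    ext i j
    by_cases hij : i = j <;> simp [hij, M, add_comm] <;> exact mul_comm _ _
  have hdeg : P.degree < (Finset.range (finrank ℝ E + 1)).card := by
    rw [Finset.card_range]
    refine lt_of_le_of_lt Polynomial.degree_le_natDegree ?_
    have := Polynomial.natDegree_det_X_add_C_le M 1
    rw [Fintype.card_fin] at this
    exact_mod_cast Nat.lt_succ_of_le this
  have h1 := Lagrange.eq_interpolate (ht.injOn) hdeg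
  have h2 := congrArg (Polynomial.eval 1) h1
  rw [hP 1, one_smul, Lagrange.interpolate_apply, Polynomial.eval_finsetSum] at h2
  rw [h2]
  refine Finset.sum_congr rfl fun i _ => ?_
  simp [hP, mul_comm]

/-- A perturbation `id + t g` with `t g` contracting and supported in a ball permutes that ball. -/
lemma bijOn_ball {g : E → E} {K : ℝ≥0} {ρ : ℝ} (hg : LipschitzWith K g)
    (h0 : ∀ x, x ∉ ball (0 : E) ρ → g x = 0) {t : ℝ} (ht : 0 ≤ t) (htK : t * K < 1) :
    BijOn (fun x => x + t • g x) (ball 0 ρ) (ball 0 ρ) := by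
  have hdist : ∀ x y, ‖t • g x - t • g y‖ ≤ t * K * ‖x - y‖ := fun x y => by
    rw [← smul_sub, norm_smul, Real.norm_of_nonneg ht, mul_assoc]
    exact mul_le_mul_of_nonneg_left (by simpa [dist_eq_norm] using hg.dist_le_mul x y) ht
  have hinj : Function.Injective (fun x => x + t • g x) := by
    intro x y hxy
    have h1 : x - y = -(t • g x - t • g y) := by
      rw [neg_sub, sub_eq_sub_iff_add_eq_add, add_comm (t • g y)]
      exact hxy
    have h2 := hdist x y
    rw [← norm_neg, ← h1] at h2
    by_contra hne
    have := norm_pos_iff.2 (sub_ne_zero.2 hne)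
    nlinarith
  refine ⟨fun x hx => ?_, hinj.injOn, fun y hy => ?_⟩
  · by_contra hy
    have h1 := h0 _ hy
    refine hy ?_
    have : (fun x => x + t • g x) (x + t • g x) = (fun x => x + t • g x) x := by
      simp only at h1 ⊢
      rw [h1]; simp
    simpa [hinj this] using hx
  · have hc : ContractingWith (⟨t, ht⟩ * K) (fun x => y - t • g x) := by
      refine ⟨by exact_mod_cast htK, LipschitzWith.of_dist_le_mul fun a b => ?_⟩
      rw [dist_eq_norm, dist_eq_norm, norm_sub_rev a b]
      simpa only [sub_sub_sub_cancel_left] using! hdist b a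
    have hfix := hc.fixedPoint_isFixedPt
    set x := ContractingWith.fixedPoint _ hc
    have hx : y - t • g x = x := hfix
    refine ⟨x, ?_, ?_⟩
    · by_contra hxn
      rw [h0 x hxn, smul_zero, sub_zero] at hx
      exact hxn (hx ▸ hy)
    · simp only
      rw [← hx]
      nth_rewrite 2 [hx]
      simp

/-- The change of variables formula for the bijection `id + t g` of the ball, whose Jacobian
determinant is positive. -/
lemma integral_det_eq_volume [MeasurableSpace E] [BorelSpace E]
    {g : E → E} {K : ℝ≥0} {ρ : ℝ} (hg : LipschitzWith K g)
    (h0 : ∀ x, x ∉ ball (0 : E) ρ → g x = 0)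
    (hd : ∀ x ∈ ball (0 : E) ρ, DifferentiableAt ℝ g x)
    {t : ℝ} (ht : 0 ≤ t) (htK : t * K < 1) :
    IntegrableOn (fun x => (1 + t • fderiv ℝ g x).det) (ball 0 ρ) volume ∧
    ∫ x in ball (0 : E) ρ, (1 + t • fderiv ℝ g x).det = volume.real (ball (0 : E) ρ) := by
  have hb := bijOn_ball hg h0 ht htK
  have hf' : ∀ x ∈ ball (0 : E) ρ, HasFDerivWithinAt (fun x => x + t • g x)
      (1 + t • fderiv ℝ g x) (ball 0 ρ) x := fun x hx =>
    ((hasFDerivAt_id x).add ((hd x hx).hasFDerivAt.const_smul t)).hasFDerivWithinAt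
  have habs : ∀ x, |(1 + t • fderiv ℝ g x).det| = (1 + t • fderiv ℝ g x).det := fun x => by
    refine abs_of_pos (det_pos_of_norm_lt_one _ ?_)
    rw [norm_smul, Real.norm_of_nonneg ht]
    exact lt_of_le_of_lt
      (mul_le_mul_of_nonneg_left (norm_fderiv_le_of_lipschitz ℝ hg) ht) htK
  have h1 := integrableOn_image_iff_integrableOn_abs_det_fderiv_smul volume
    measurableSet_ball hf' hb.injOn (fun _ => (1 : ℝ))
  have h2 := integral_image_eq_integral_abs_det_fderiv_smul volume
    measurableSet_ball hf' hb.injOn (fun _ => (1 : ℝ))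
  simp only [habs, smul_eq_mul, mul_one, hb.image_eq] at h1 h2
  refine ⟨h1.1 (integrableOn_const measure_ball_lt_top.ne), ?_⟩
  rw [← h2]
  simp

/-- There is no Lipschitz retraction `id + g` of a ball onto its boundary sphere that is
differentiable in the open ball. -/
lemma no_lipschitz_retraction [MeasurableSpace E] [BorelSpace E]
    {g : E → E} {K : ℝ≥0} {ρ : ℝ} (hρ : 0 < ρ)
    (hg : LipschitzWith K g)
    (h0 : ∀ x, x ∉ ball (0 : E) ρ → g x = 0)
    (hd : ∀ x ∈ ball (0 : E) ρ, DifferentiableAt ℝ g x)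
    (hs : ∀ x ∈ ball (0 : E) ρ, ‖x + g x‖ = ρ) : False := by
  -- Distinct interpolation nodes in `[0, 1 / K)`, where the volume identity is available.
  let t : ℕ → ℝ := fun i => 1 / ((i + 1 : ℝ) * (K + 1))
  have hK : (0 : ℝ) ≤ K := K.2
  have ht0 : ∀ i, 0 ≤ t i := fun i => by positivity
  have htK : ∀ i, t i * K < 1 := fun i => by
    have : (0 : ℝ) ≤ i := i.cast_nonneg
    simp only [t]
    rw [div_mul_eq_mul_div, one_mul, div_lt_one (by positivity)]
    nlinarith [mul_nonneg this hK]
  have htinj : Function.Injective t := by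
    intro i j hij
    simp only [t] at hij
    have h1 := mul_right_cancel₀ (by positivity : (K + 1 : ℝ) ≠ 0)
      (inv_injective (by simpa using hij) : (i + 1 : ℝ) * (K + 1) = (j + 1) * (K + 1))
    exact_mod_cast add_right_cancel h1
  have hdet : ∀ x ∈ ball (0 : E) ρ, (1 + fderiv ℝ g x).det = 0 := by
    intro x hx
    have hF : HasFDerivAt (fun x => x + g x) (1 + fderiv ℝ g x) x :=
      (hasFDerivAt_id x).add (hd x hx).hasFDerivAt
    -- `‖x + g x‖ ^ 2` is constant on the ball, so its derivative `2 ⟪x + g x, (1 + g' x) ·⟫`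
    -- vanishes; an invertible `1 + g' x` would then force `x + g x = 0`.
    have h1 := hF.norm_sq
    have h2 : (fun x => ‖x + g x‖ ^ 2) =ᶠ[nhds x] fun _ => ρ ^ 2 := by
      filter_upwards [isOpen_ball.mem_nhds hx] with y hy
      rw [hs y hy]
    have h3 := h1.unique ((hasFDerivAt_const (ρ ^ 2) x).congr_of_eventuallyEq h2)
    by_contra hne
    have hunit : IsUnit (LinearMap.det ((1 + fderiv ℝ g x : E →L[ℝ] E) : E →ₗ[ℝ] E)) :=
      isUnit_iff_ne_zero.2 hne
    have hsurj : Function.Surjective ((1 + fderiv ℝ g x : E →L[ℝ] E) : E →ₗ[ℝ] E) := by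
      rw [← LinearMap.range_eq_top]
      exact LinearMap.range_eq_top.2
        ((Module.End.isUnit_iff _).1 ((LinearMap.isUnit_iff_isUnit_det _).2 hunit)).2
    obtain ⟨v, hv⟩ := hsurj (x + g x)
    have hv' : (1 + fderiv ℝ g x) v = x + g x := hv
    have h4 := congrArg (fun L : E →L[ℝ] ℝ => L v) h3
    have h5 : 2 * inner ℝ (x + g x) ((1 + fderiv ℝ g x) v) = 0 := by
      simp at h4
      simp only [add_apply, one_apply_eq_self, inner_add_left,
        inner_add_right] at h4 ⊢
      linarith
    rw [hv', real_inner_self_eq_norm_sq] at h5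
    rw [hs x hx] at h5
    exact (pow_pos hρ 2).ne' (by linarith)
  let N := Finset.range (finrank ℝ E + 1)
  have h1 : ∫ x in ball (0 : E) ρ, (1 + fderiv ℝ g x).det = 0 :=
    setIntegral_eq_zero_of_forall_eq_zero hdet
  have h2 : ∫ x in ball (0 : E) ρ, (1 + fderiv ℝ g x).det
      = ∑ i ∈ N, (Lagrange.basis N t i).eval 1 * volume.real (ball (0 : E) ρ) := by
    rw [setIntegral_congr_fun measurableSet_ball
      (fun x _ => det_eq_sum_interpolation (fderiv ℝ g x) t htinj)]
    rw [integral_finsetSum _ fun i _ =>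
      (integral_det_eq_volume hg h0 hd (ht0 i) (htK i)).1.const_mul _]
    refine Finset.sum_congr rfl fun i _ => ?_
    rw [integral_const_mul, (integral_det_eq_volume hg h0 hd (ht0 i) (htK i)).2]
  have h3 : ∑ i ∈ N, (Lagrange.basis N t i).eval 1 = 1 := by
    rw [← Polynomial.eval_finsetSum, Lagrange.sum_basis htinj.injOn (by simp [N])]
    simp
  rw [h1, ← Finset.sum_mul, h3, one_mul] at h2
  exact (ENNReal.toReal_pos (measure_ball_pos volume 0 hρ).ne' measure_ball_lt_top.ne).ne h2

omit [FiniteDimensional ℝ E] in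
lemma exists_sphere_between {ρ : ℝ} {x y : E} (hx : ‖x‖ ≤ ρ) (hy : ρ ≤ ‖y‖) :
    ∃ z : E, ‖z‖ = ρ ∧ dist x z ≤ dist x y := by
  have hc : ContinuousOn (fun s : ℝ => ‖AffineMap.lineMap x y s‖) (Icc 0 1) := by fun_prop
  obtain ⟨s, hs, hs'⟩ := intermediate_value_Icc zero_le_one hc
    (show ρ ∈ _ by simpa using ⟨hx, hy⟩)
  refine ⟨_, hs', ?_⟩
  rw [dist_left_lineMap, Real.norm_of_nonneg hs.1]
  exact mul_le_of_le_one_left dist_nonneg hs.2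

omit [FiniteDimensional ℝ E] in
lemma lipschitz_extend_zero {G : E → E} {K : ℝ≥0} {ρ : ℝ}
    (hG : LipschitzOnWith K G (closedBall 0 ρ)) (h0 : ∀ x, ‖x‖ = ρ → G x = 0) :
    LipschitzWith K ((ball (0 : E) ρ).indicator G) := by
  have key : ∀ x y, x ∈ ball (0 : E) ρ → y ∉ ball (0 : E) ρ →
      dist ((ball (0 : E) ρ).indicator G x) ((ball (0 : E) ρ).indicator G y) ≤ K * dist x y := by
    intro x y hx hy
    rw [indicator_of_mem hx, indicator_of_notMem hy]
    obtain ⟨z, hz, hxz⟩ := exists_sphere_between (ρ := ρ) (x := x) (y := y)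
      (by simpa using (mem_ball.1 hx).le) (by simpa using hy)
    rw [← h0 z hz]
    exact (hG.dist_le_mul x (ball_subset_closedBall hx) z (by simp [hz])).trans
      (mul_le_mul_of_nonneg_left hxz K.2)
  refine LipschitzWith.of_dist_le_mul fun x y => ?_
  by_cases hx : x ∈ ball (0 : E) ρ <;> by_cases hy : y ∈ ball (0 : E) ρ
  · rw [indicator_of_mem hx, indicator_of_mem hy]
    exact hG.dist_le_mul x (ball_subset_closedBall hx) y (ball_subset_closedBall hy)
  · exact key x y hx hy
  · rw [dist_comm, dist_comm x]
    exact key y x hy hx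
  · rw [indicator_of_notMem hx, indicator_of_notMem hy, dist_self]
    positivity

/-- Brouwer's theorem for `C¹` maps with values in an open ball. -/
lemma exists_fixedPoint_of_contDiff {h : E → E} (hh : ContDiff ℝ 1 h) {ρ : ℝ} (hρ : 0 < ρ)
    (hb : ∀ x, ‖h x‖ < ρ) : ∃ x, h x = x := by
  by_contra! hne
  -- `x + l x • u x` is the point where the ray from `h x` through `x` leaves the ball: `l x` is the
  -- larger root of a quadratic equation with (reduced) discriminant `d x`.
  let u : E → E := fun x => x - h x
  have hu0 : ∀ x, u x ≠ 0 := fun x => sub_ne_zero.2 (hne x).symm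
  have hu : ContDiff ℝ 1 u := contDiff_id.sub hh
  let d : E → ℝ := fun x => inner ℝ x (u x) ^ 2 + ‖u x‖ ^ 2 * (ρ ^ 2 - ‖x‖ ^ 2)
  have hsph : ∀ x, ‖x‖ = ρ → 0 < inner ℝ x (u x) := by
    intro x hx
    have h1 := real_inner_le_norm x (h x)
    simp only [u, inner_sub_right, real_inner_self_eq_norm_sq]
    rw [hx] at *
    nlinarith [hb x]
  have hd0 : ∀ x ∈ closedBall (0 : E) ρ, 0 < d x := by
    intro x hx
    have hx' : ‖x‖ ≤ ρ := by simpa using hx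
    have hup : 0 < ‖u x‖ ^ 2 := pow_pos (norm_pos_iff.2 (hu0 x)) 2
    rcases hx'.lt_or_eq with h | h
    · have : 0 < ρ ^ 2 - ‖x‖ ^ 2 := by nlinarith [norm_nonneg x]
      simp only [d]
      positivity
    · have := hsph x h
      simp only [d, h, sub_self, mul_zero, add_zero]
      positivity
  have hd : ContDiff ℝ 1 d := ((contDiff_id.inner ℝ hu).pow 2).add
    ((hu.norm_sq ℝ).mul (contDiff_const.sub (contDiff_id.norm_sq ℝ)))
  let l : E → ℝ := fun x => (-inner ℝ x (u x) + √(d x)) / ‖u x‖ ^ 2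
  let G : E → E := fun x => l x • u x
  have hG : ∀ x ∈ closedBall (0 : E) ρ, ContDiffAt ℝ 1 G x := by
    intro x hx
    refine ContDiffAt.smul (ContDiffAt.div ?_ (hu.norm_sq ℝ).contDiffAt
      (pow_ne_zero 2 (norm_ne_zero_iff.2 (hu0 x)))) hu.contDiffAt
    exact (contDiff_id.inner ℝ hu).contDiffAt.neg.add (hd.contDiffAt.sqrt (hd0 x hx).ne')
  have hGs : ∀ x, ‖x‖ = ρ → G x = 0 := by
    intro x hx
    have : l x = 0 := by
      simp only [l, d, hx, sub_self, mul_zero, add_zero]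
      rw [Real.sqrt_sq (hsph x hx).le, neg_add_cancel, zero_div]
    simp only [G, this, zero_smul]
  have hGn : ∀ x ∈ closedBall (0 : E) ρ, ‖x + G x‖ = ρ := by
    intro x hx
    have h1 : ‖x + G x‖ ^ 2 = ρ ^ 2 := by
      rw [norm_add_sq_real]
      simp only [G, inner_smul_right, norm_smul, mul_pow, Real.norm_eq_abs, sq_abs]
      have hup : ‖u x‖ ^ 2 ≠ 0 := pow_ne_zero 2 (norm_ne_zero_iff.2 (hu0 x))
      have hl : l x * ‖u x‖ ^ 2 = -inner ℝ x (u x) + √(d x) := div_mul_cancel₀ _ hup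
      have hsq : √(d x) ^ 2 = inner ℝ x (u x) ^ 2 + ‖u x‖ ^ 2 * (ρ ^ 2 - ‖x‖ ^ 2) :=
        Real.sq_sqrt (hd0 x hx).le
      have h2 : (l x * ‖u x‖ ^ 2 + inner ℝ x (u x)) ^ 2
        = inner ℝ x (u x) ^ 2 + ‖u x‖ ^ 2 * (ρ ^ 2 - ‖x‖ ^ 2) := by rw [hl, ← hsq]; ring
      apply mul_left_cancel₀ hup
      linear_combination h2
    exact (pow_left_inj₀ (norm_nonneg _) hρ.le two_ne_zero).1 h1
  obtain ⟨K, hK⟩ := ContDiffOn.exists_lipschitzOnWith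
    (fun x hx => (hG x hx).contDiffWithinAt) one_ne_zero (convex_closedBall (0 : E) ρ)
    (isCompact_closedBall 0 ρ)
  let _ : MeasurableSpace E := borel E
  have _ : BorelSpace E := ⟨rfl⟩
  refine no_lipschitz_retraction hρ (lipschitz_extend_zero hK hGs)
    (fun x hx => indicator_of_notMem hx _) (fun x hx => ?_) (fun x hx => ?_)
  · refine ((hG x (ball_subset_closedBall hx)).differentiableAt one_ne_zero).congr_of_eventuallyEq ?_
    filter_upwards [isOpen_ball.mem_nhds hx] with y hy
    exact indicator_of_mem hy _
  · rw [indicator_of_mem hx]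
    exact hGn x (ball_subset_closedBall hx)

/-- Brouwer's theorem for continuous maps with values in a ball of a Euclidean space. -/
lemma exists_fixedPoint_of_continuous {h : E → E} (hh : Continuous h) {ρ : ℝ}
    (hb : ∀ x, ‖h x‖ ≤ ρ) : ∃ x, h x = x := by
  have hρ : 0 ≤ ρ := (norm_nonneg _).trans (hb 0)
  by_contra! hne
  have hcpt : IsCompact (closedBall (0 : E) (ρ + 1)) := isCompact_closedBall _ _
  obtain ⟨x₀, -, hmin⟩ := hcpt.exists_isMinOn ⟨0, by simp; linarith⟩
    (f := fun x => dist (h x) x) (by fun_prop)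
  have hpos : 0 < min (dist (h x₀) x₀) 1 := lt_min (dist_pos.2 (hne x₀)) one_pos
  -- A `C¹` map `k` closer to `h` than the least displacement of `h` has no fixed point.
  obtain ⟨k, hk, hkd, -⟩ := hh.exists_contDiff_approx 1
    (continuous_const (y := min (dist (h x₀) x₀) 1)) (fun _ => hpos)
  have hkb : ∀ x, ‖k x‖ < ρ + 1 := fun x => by
    have h1 := (hkd x).trans_le (min_le_right _ _)
    rw [dist_eq_norm] at h1
    have h2 := norm_le_norm_add_norm_sub' (k x) (h x)
    linarith [hb x]
  obtain ⟨x, hx⟩ := exists_fixedPoint_of_contDiff hk (by linarith) hkb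
  have h1 := (hkd x).trans_le (min_le_left _ _)
  have h2 : x ∈ closedBall (0 : E) (ρ + 1) := by
    simpa [hx] using (hkb x).le
  have h3 := hmin h2
  simp only [mem_ofPred_eq] at h3
  rw [hx, dist_comm] at h1
  linarith

end Brouwer

/-- Brouwer's theorem for bounded continuous self-maps of a finite-dimensional normed space. -/
lemma exists_fixedPoint_of_bounded {F : Type*} [NormedAddCommGroup F] [NormedSpace ℝ F]
    [FiniteDimensional ℝ F] {h : F → F} (hh : Continuous h) {R : ℝ}
    (hb : ∀ x, ‖h x‖ ≤ R) : ∃ x, h x = x := by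
  let e := toEuclidean (E := F)
  obtain ⟨x, hx⟩ := exists_fixedPoint_of_continuous (h := fun x => e (h (e.symm x)))
    (by fun_prop) (ρ := ‖(e : F →L[ℝ] EuclideanSpace ℝ (Fin (finrank ℝ F)))‖ * R) (fun x =>
      ((e : F →L[ℝ] EuclideanSpace ℝ (Fin (finrank ℝ F))).le_opNorm _).trans
        (mul_le_mul_of_nonneg_left (hb _) (norm_nonneg _)))
  exact ⟨e.symm x, by rw [e.eq_symm_apply]; exact hx⟩

/-! ### Paths of approximate fixed points -/

/-- For a bounded family `f (t, ·)` of self-maps of a finite-dimensional space, the set of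
`η`-approximate fixed points contains a path from `{t ≤ a}` to `{t ≥ b}`. -/
lemma exists_path {F : Type*} [NormedAddCommGroup F] [NormedSpace ℝ F]
    [FiniteDimensional ℝ F] {f : ℝ × F → F} (hf : Continuous f) {R : ℝ}
    (hb : ∀ z, ‖f z‖ ≤ R) {a b : ℝ} {η : ℝ} (hη : 0 < η) :
    ∃ z w : ℝ × F, z.1 ≤ a ∧ b ≤ w.1 ∧ JoinedIn {z | dist (f z) z.2 < η} z w := by
  set O : Set (ℝ × F) := {z | dist (f z) z.2 < η} with hO
  have hOo : IsOpen O := isOpen_lt (by fun_prop) continuous_const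
  -- The points of `O` that can be reached inside `O` from `{t ≤ a}`.
  let U : Set (ℝ × F) := {w | ∃ z, z.1 ≤ a ∧ JoinedIn O z w}
  have hUO : U ⊆ O := fun w ⟨z, _, h⟩ => h.target_mem
  have hUo : IsOpen U := by
    have : U = ⋃ z ∈ {z : ℝ × F | z.1 ≤ a}, pathComponentIn O z := by
      ext w; simp [U, pathComponentIn]
    rw [this]
    exact isOpen_biUnion fun z _ => hOo.pathComponentIn z
  have hVo : IsOpen (O \ U) := by
    have : O \ U = ⋃ z ∈ O \ U, pathComponentIn O z := by
      ext w
      simp only [mem_iUnion, exists_prop]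
      constructor
      · intro hw
        exact ⟨w, hw, mem_pathComponentIn_self hw.1⟩
      · rintro ⟨z, hz, hzw : JoinedIn O z w⟩
        exact ⟨hzw.target_mem, fun ⟨y, hy, hyw⟩ => hz.2 ⟨y, hy, hyw.trans hzw.symm⟩⟩
    rw [this]
    exact isOpen_biUnion fun z _ => hOo.pathComponentIn z
  by_contra! hcon
  let H : Set (ℝ × F) := {z | dist (f z) z.2 ≤ η / 2}
  have hH : IsClosed H := isClosed_le (by fun_prop) continuous_const
  have hHO : H ⊆ O := fun z hz =>
    lt_of_le_of_lt (b := η / 2) hz (by linarith)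
  have h1 : IsClosed (H ∩ U) := by
    have : H ∩ U = H \ (O \ U) := by
      ext z; simp only [mem_inter_iff, mem_sdiff, not_and, not_not]
      exact ⟨fun h => ⟨h.1, fun _ => h.2⟩, fun h => ⟨h.1, h.2 (hHO h.1)⟩⟩
    rw [this]
    exact hH.sdiff hVo
  have h2 : IsClosed (H \ U) := hH.sdiff hUo
  obtain ⟨τ, hτ0, hτ1, hτ⟩ := exists_continuous_zero_one_of_isClosed h2 h1
    (disjoint_left.2 fun z hz hz' => hz.2 hz'.2)
  obtain ⟨z, hz⟩ := exists_fixedPoint_of_bounded (F := ℝ × F)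
    (h := fun z => (a + τ z * (b - a), f z)) (by fun_prop) (R := max (|a| + |b - a|) R) (by
      intro z
      rw [Prod.norm_def]
      refine max_le_max ?_ (hb z)
      refine (norm_add_le _ _).trans (add_le_add le_rfl ?_)
      rw [norm_mul, Real.norm_of_nonneg (hτ z).1]
      exact mul_le_of_le_one_left (abs_nonneg _) (hτ z).2)
  have hz1 : a + τ z * (b - a) = z.1 := congrArg Prod.fst hz
  have hz2 : f z = z.2 := congrArg Prod.snd hz
  have hzH : z ∈ H := by simp only [H, mem_ofPred_eq, hz2, dist_self]; positivity
  by_cases hzU : z ∈ U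
  · have := hτ1 ⟨hzH, hzU⟩
    rw [this] at hz1
    obtain ⟨y, hy, hyz⟩ := hzU
    exact hcon y z hy (by simp at hz1; exact hz1.le) hyz
  · have := hτ0 ⟨hzH, hzU⟩
    rw [this] at hz1
    exact hzU ⟨z, by simp at hz1; exact hz1.ge, JoinedIn.refl (hHO hzH)⟩

/-! ### Reduction to finite dimension -/

open Classical in
/-- A compact set can be moved by an arbitrarily small continuous displacement into a
finite-dimensional subspace. -/
lemma exists_schauder_projection {X : Type*} [NormedAddCommGroup X] [NormedSpace ℝ X]
    {K : Set X} (hK : IsCompact K) {δ : ℝ} (hδ : 0 < δ) :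
    ∃ F : Submodule ℝ X, FiniteDimensional ℝ F ∧ ∃ P : X → F, ContinuousOn P K ∧
      ∀ y ∈ K, dist (P y : X) y ≤ δ := by
  obtain ⟨T, -, hTfin, hcov⟩ := hK.finite_cover_balls hδ
  lift T to Finset X using hTfin
  let F := Submodule.span ℝ (T : Set X)
  let v : X → F := fun i => if h : i ∈ F then ⟨i, h⟩ else 0
  have hv : ∀ i ∈ T, (v i : X) = i := fun i hi => by
    have : i ∈ F := Submodule.subset_span hi
    simp [v, this]
  -- Unnormalized partition of unity subordinate to the balls of radius `δ` around `T`.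
  let w : X → X → ℝ := fun i y => max 0 (δ - dist y i)
  let S : X → ℝ := fun y => ∑ i ∈ T, w i y
  have hw0 : ∀ i y, 0 ≤ w i y := fun i y => le_max_left _ _
  have hS : ∀ y ∈ K, 0 < S y := by
    intro y hy
    obtain ⟨i, hi, hyi⟩ := mem_iUnion₂.1 (hcov hy)
    exact Finset.sum_pos' (fun i _ => hw0 i y) ⟨i, hi, lt_max_of_lt_right (sub_pos.2 hyi)⟩
  refine ⟨F, FiniteDimensional.span_finset ℝ T, fun y => ∑ i ∈ T, (w i y / S y) • v i, ?_, ?_⟩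
  · refine continuousOn_finsetSum _ fun i _ => ContinuousOn.smul (ContinuousOn.div ?_ ?_
      fun y hy => (hS y hy).ne') continuousOn_const
    · fun_prop
    · fun_prop
  · intro y hy
    have hsum : ∑ i ∈ T, w i y / S y = 1 := by
      rw [← Finset.sum_div, div_self (hS y hy).ne']
    have h1 : ((∑ i ∈ T, (w i y / S y) • v i : F) : X) - y
        = ∑ i ∈ T, (w i y / S y) • (i - y) := by
      simp_rw [smul_sub]
      rw [Finset.sum_sub_distrib, ← Finset.sum_smul, hsum, one_smul]
      push_cast
      congr 1
      exact Finset.sum_congr rfl fun i hi => by rw [hv i hi]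
    rw [dist_eq_norm, h1]
    calc ‖∑ i ∈ T, (w i y / S y) • (i - y)‖ ≤ ∑ i ∈ T, ‖(w i y / S y) • (i - y)‖ :=
          norm_sum_le _ _
      _ ≤ ∑ i ∈ T, (w i y / S y) * δ := by
          refine Finset.sum_le_sum fun i _ => ?_
          have hq : 0 ≤ w i y / S y := div_nonneg (hw0 i y) (hS y hy).le
          rw [norm_smul, Real.norm_of_nonneg hq]
          by_cases hi : dist y i ≤ δ
          · rw [← dist_eq_norm, dist_comm]
            exact mul_le_mul_of_nonneg_left hi hq
          · have : w i y = 0 := max_eq_left (by linarith)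
            simp [this]
      _ = δ := by rw [← Finset.sum_mul, hsum, one_mul]

/-- Under the stretching hypothesis, `φ` has `ε`-approximate fixed points in `W` for every `ε > 0`. -/
lemma exists_dist_lt
    {X : Type*} [NormedAddCommGroup X] [NormedSpace ℝ X]
    (A : Set X) (r : X → X) (hr_cont : Continuous r) (hr_mem : ∀ x : X, r x ∈ A)
    (hr_id : ∀ x ∈ A, r x = x)
    (a b : ℝ) (hab : a < b) (φ : ℝ × X → ℝ × X)
    (W : Set (ℝ × X)) (hW_closed : IsClosed W)
    (hW_sub : W ⊆ Icc a b ×ˢ A)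
    (hφ_cont : ContinuousOn φ W) (hφ_comp : IsCompact (closure (φ '' W)))
    (hstretch : ∀ σ : ℝ → ℝ × X, ContinuousOn σ (Icc (0:ℝ) 1) →
      σ '' Icc (0:ℝ) 1 ⊆ Icc a b ×ˢ A →
      (σ '' Icc (0:ℝ) 1 ∩ ({a} : Set ℝ) ×ˢ A).Nonempty →
      (σ '' Icc (0:ℝ) 1 ∩ ({b} : Set ℝ) ×ˢ A).Nonempty →
      ∃ s₀ s₁ : ℝ, 0 ≤ s₀ ∧ s₀ ≤ s₁ ∧ s₁ ≤ 1 ∧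
        σ '' Icc s₀ s₁ ⊆ W ∧
        φ '' (σ '' Icc s₀ s₁) ⊆ Icc a b ×ˢ A ∧
        (φ '' (σ '' Icc s₀ s₁) ∩ ({a} : Set ℝ) ×ˢ A).Nonempty ∧
        (φ '' (σ '' Icc s₀ s₁) ∩ ({b} : Set ℝ) ×ˢ A).Nonempty)
    {ε : ℝ} (hε : 0 < ε) :
    ∃ z ∈ W, dist (φ z) z < ε := by
  have hA : IsClosed A := by
    have : A = {x | r x = x} := Subset.antisymm hr_id fun x hx => by
      have h := hr_mem x
      rwa [show r x = x from hx] at h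
    rw [this]
    exact isClosed_eq hr_cont continuous_id
  let K : Set X := Prod.snd '' closure (φ '' W) ∩ A
  have hK : IsCompact K := (hφ_comp.image continuous_snd).inter_right hA
  obtain ⟨δ, hδ, hrδ⟩ : ∃ δ > 0, ∀ y ∈ K, ∀ x, dist x y < δ → dist y (r x) < ε := by
    have h1 := hK.uniformContinuousAt_of_continuousAt r (fun x _ => hr_cont.continuousAt)
      (dist_mem_uniformity hε)
    obtain ⟨δ, hδ, h2⟩ := mem_uniformity_dist.1 h1
    refine ⟨δ, hδ, fun y hy x hxy => ?_⟩
    have h3 := h2 (a := y) (b := x) (by rwa [dist_comm]) hy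
    rw [hr_id y hy.2] at h3
    exact h3
  obtain ⟨F, hF, P, hPc, hPd⟩ := exists_schauder_projection hK (half_pos hδ)
  obtain ⟨R, hR⟩ := (hK.image_of_continuousOn hPc).isBounded.exists_norm_le
  let W' : Set (ℝ × X) := {z ∈ W | (φ z).2 ∈ A}
  have hW' : IsClosed W' :=
    (continuous_snd.comp_continuousOn hφ_cont).preimage_isClosed_of_isClosed hW_closed hA
  -- The retraction of `ℝ` onto `[a, b]`.
  let c : ℝ → ℝ := fun t => max a (min b t)
  have hcc : Continuous c := by fun_prop
  have hc_mem : ∀ t, c t ∈ Icc a b := fun t =>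
    ⟨le_max_left _ _, max_le hab.le (min_le_left _ _)⟩
  have hc_id : ∀ t ∈ Icc a b, c t = t := fun t ht => by
    simp only [c]; rw [min_eq_right ht.2, max_eq_right ht.1]
  let ψ : ℝ × F → ℝ × X := fun z => (c z.1, r z.2)
  have hψ : Continuous ψ := by fun_prop
  let S : Set (ℝ × F) := ψ ⁻¹' W'
  have hS : IsClosed S := hW'.preimage hψ
  have hSK : ∀ z ∈ W', (φ z).2 ∈ K := fun z hz =>
    ⟨⟨φ z, subset_closure ⟨z, hz.1, rfl⟩, rfl⟩, hz.2⟩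
  have hqc : ContinuousOn (fun z => P (φ (ψ z)).2) S :=
    hPc.comp (continuous_snd.comp_continuousOn
      (hφ_cont.comp hψ.continuousOn fun z hz => hz.1)) fun z hz => hSK _ hz
  let q : BoundedContinuousFunction S F := BoundedContinuousFunction.ofNormedAddCommGroup
    (S.domRestrict fun z => P (φ (ψ z)).2) hqc.domRestrict R
    fun z => hR _ ⟨_, hSK _ z.2, rfl⟩
  obtain ⟨g, -, hg⟩ := BoundedContinuousFunction.exists_norm_eq_domRestrict_eq hS ℝ q
  have hgS : ∀ z ∈ S, g z = P (φ (ψ z)).2 := fun z hz =>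
    congrArg (fun k : BoundedContinuousFunction S F => k ⟨z, hz⟩) hg
  -- With `c` built into the family, the path can be clamped to `[a, b]` afterwards.
  obtain ⟨z₀, z₁, hz₀, hz₁, hJ⟩ := exists_path (F := F) (f := fun z => g (c z.1, z.2))
    (by fun_prop) (R := ‖g‖) (fun z => g.norm_coe_le_norm _) (a := a) (b := b) (half_pos hδ)
  let γ := hJ.somePath
  let σ : ℝ → ℝ × X := fun u => ψ (γ.extend u)
  have hσ : Continuous σ := hψ.comp γ.continuous_extend
  have hnear : ∀ u, σ u ∈ W' → dist (φ (σ u)).2 (σ u).2 < ε := by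
    intro u hu
    obtain ⟨p, hp⟩ : γ.extend u ∈ range γ := by
      rw [← γ.extend_range]; exact mem_range_self u
    have h1 : dist (g (c (γ.extend u).1, (γ.extend u).2)) (γ.extend u).2 < δ / 2 := by
      rw [← hp]; exact hJ.somePath_mem p
    have hψc : ψ (c (γ.extend u).1, (γ.extend u).2) = σ u := by
      simp only [ψ, σ, hc_id _ (hc_mem _)]
    have hmem : (c (γ.extend u).1, (γ.extend u).2) ∈ S := by
      change ψ _ ∈ W'
      rwa [hψc]
    rw [hgS _ hmem, hψc] at h1
    have h2 := hPd _ (hSK _ hu)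
    refine hrδ _ (hSK _ hu) ((γ.extend u).2 : X) ?_
    have h3 : dist (P (φ (σ u)).2 : X) ((γ.extend u).2 : X) < δ / 2 := h1
    calc dist ((γ.extend u).2 : X) (φ (σ u)).2
        ≤ dist ((γ.extend u).2 : X) (P (φ (σ u)).2 : X) + dist (P (φ (σ u)).2 : X) (φ (σ u)).2 :=
          dist_triangle _ _ _
      _ < δ := by rw [dist_comm]; linarith
  obtain ⟨s₀, s₁, -, -, -, hW, hC, ⟨_, ⟨_, ⟨u₀, hu₀, rfl⟩, rfl⟩, hl⟩,
      ⟨_, ⟨_, ⟨u₁, hu₁, rfl⟩, rfl⟩, hr⟩⟩ := hstretch σ hσ.continuousOn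
    (by rintro _ ⟨u, -, rfl⟩; exact ⟨hc_mem _, hr_mem _⟩)
    ⟨σ 0, ⟨0, by simp, rfl⟩, by
      simp only [σ, ψ, c, Path.extend_zero]
      exact ⟨max_eq_left ((min_le_right _ _).trans hz₀), hr_mem _⟩⟩
    ⟨σ 1, ⟨1, by simp, rfl⟩, by
      simp only [σ, ψ, c, Path.extend_one]
      exact ⟨by rw [min_eq_left hz₁, max_eq_right hab.le]; rfl, hr_mem _⟩⟩
  have hW2 : ∀ u ∈ Icc s₀ s₁, σ u ∈ W := fun u hu => hW ⟨u, hu, rfl⟩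
  have hcont : ContinuousOn (fun u => (φ (σ u)).1 - (σ u).1) (Icc s₀ s₁) :=
    (continuous_fst.comp_continuousOn (hφ_cont.comp hσ.continuousOn hW2)).sub
      (by fun_prop)
  have hl1 : (φ (σ u₀)).1 = a := hl.1
  have hr1 : (φ (σ u₁)).1 = b := hr.1
  obtain ⟨u, hu, hu0⟩ := isPreconnected_Icc.intermediate_value hu₀ hu₁ hcont
    (show (0 : ℝ) ∈ _ by
      rw [hl1, hr1]
      exact ⟨sub_nonpos.2 (hW_sub (hW2 _ hu₀)).1.1, sub_nonneg.2 (hW_sub (hW2 _ hu₁)).1.2⟩)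
  refine ⟨σ u, hW2 u hu, ?_⟩
  rw [Prod.dist_eq]
  refine max_lt ?_ (hnear u ⟨hW2 u hu, (hC ⟨_, ⟨u, hu, rfl⟩, rfl⟩).2⟩)
  rw [sub_eq_zero.1 hu0, dist_self]
  exact hε

end CylinderRetract

/-- **Main theorem (Theorem 2.1): stretching along paths on a topological cylinder
with base a retract of a normed linear space.** -/
theorem fixed_point_cylinder_retract
    {X : Type*} [NormedAddCommGroup X] [NormedSpace ℝ X]
    (A : Set X) (hA_ne : A.Nonempty)
    (r : X → X) (hr_cont : Continuous r) (hr_mem : ∀ x : X, r x ∈ A)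
    (hr_id : ∀ x ∈ A, r x = x)
    (a b : ℝ) (hab : a < b)
    (D : Set (ℝ × X)) (φ : ℝ × X → ℝ × X)
    (W : Set (ℝ × X)) (hW_closed : IsClosed W)
    (hW_sub : W ⊆ D ∩ (Icc a b ×ˢ A))
    -- (i) φ is compact on W
    (hφ_cont : ContinuousOn φ W) (hφ_comp : IsCompact (closure (φ '' W)))
    -- (ii) stretching along the paths
    (hstretch : ∀ σ : ℝ → ℝ × X, ContinuousOn σ (Icc (0:ℝ) 1) →
      σ '' Icc (0:ℝ) 1 ⊆ Icc a b ×ˢ A →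
      (σ '' Icc (0:ℝ) 1 ∩ ({a} : Set ℝ) ×ˢ A).Nonempty →
      (σ '' Icc (0:ℝ) 1 ∩ ({b} : Set ℝ) ×ˢ A).Nonempty →
      ∃ s₀ s₁ : ℝ, 0 ≤ s₀ ∧ s₀ ≤ s₁ ∧ s₁ ≤ 1 ∧
        σ '' Icc s₀ s₁ ⊆ W ∧
        φ '' (σ '' Icc s₀ s₁) ⊆ Icc a b ×ˢ A ∧
        (φ '' (σ '' Icc s₀ s₁) ∩ ({a} : Set ℝ) ×ˢ A).Nonempty ∧
        (φ '' (σ '' Icc s₀ s₁) ∩ ({b} : Set ℝ) ×ˢ A).Nonempty) :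
    ∃ z ∈ W, φ z = z := by
  have happ : ∀ ε > 0, ∃ z ∈ W, dist (φ z) z < ε := fun ε hε =>
    CylinderRetract.exists_dist_lt A r hr_cont hr_mem hr_id a b hab φ W hW_closed
      (fun z hz => (hW_sub hz).2) hφ_cont hφ_comp hstretch hε
  choose! z hzW hz using fun n : ℕ => happ (1 / (n + 1)) Nat.one_div_pos_of_nat
  obtain ⟨y, -, k, hk, hy⟩ := hφ_comp.tendsto_subseq
    (x := fun n => φ (z n)) fun n => subset_closure ⟨_, hzW n, rfl⟩
  have h0 : Filter.Tendsto (fun n => dist (φ (z (k n))) (z (k n))) Filter.atTop (nhds 0) :=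
    squeeze_zero (fun _ => dist_nonneg) (fun n => (hz (k n)).le)
      (tendsto_one_div_add_atTop_nhds_zero_nat.comp hk.tendsto_atTop)
  have h1 : Filter.Tendsto (fun n => z (k n)) Filter.atTop (nhds y) :=
    hy.congr_dist h0
  have hyW : y ∈ W := hW_closed.mem_of_tendsto h1 (Filter.Eventually.of_forall fun n => hzW _)
  refine ⟨y, hyW, tendsto_nhds_unique ?_ hy⟩
  exact (hφ_cont y hyW).tendsto.comp (tendsto_nhdsWithin_iff.2
    ⟨h1, Filter.Eventually.of_forall fun n => hzW _⟩)
end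

section
/- Let A be an absolute retract and let a < b be real numbers. Set C = [a,b] × A, C_l = {a} × A, C_r = {b} × A. Let D ⊆ C and let φ = (φ₁, φ₂) : D → ℝ × A be a map. Suppose there exists a closed set W ⊆ D such that: (i) φ restricted to W is compact; (ii) for every path σ : [0,1] → ℝ × A with support contained in C and with support intersecting both C_l and C_r, there exists a sub-path γ of σ whose support is contained in W and such that φ(γ) ⊆ C, φ(γ) ∩ C_l ≠ ∅ and φ(γ) ∩ C_r ≠ ∅. Then there exists z̃ ∈ W such that φ(z̃) = z̃. -/
/-!
Write `I = [0,1]` and `Q = ℕ → I` for the Hilbert cube.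

*Reduction to `Q`.* Only the compact set `K` of second coordinates of `closure (φ '' W)` matters.
Embed `K` into `Q` by `F`; since `A` is an absolute retract, the inverse of `F` extends to
`r : Q → A` (`IsAbsoluteRetract.exists_hilbertCube_section`). With `P (t, q) = (a + (b - a) t, r q)`,
the map `F ∘ φ₂ ∘ P` on `P ⁻¹' W` extends by Tietze to `h : I × Q → Q`.

*A path avoiding the coincidence set.* Let `T` be the closed set of `z ∈ P ⁻¹' W` at which `φ (P z)`
and `P z` have the same first coordinate. If `φ` has no fixed point in `W`, then the solution set
`{z | h z = z.2}` lies in the open set `Tᶜ`. By `exists_path_of_section`, every open neighbourhood of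
that solution set contains a path from `{0} × Q` to `{1} × Q`: otherwise the part of the solution
set that is reachable from the left is separated from the rest, and a Urysohn function `τ` equal to
`1` on the former and `0` on the latter makes `z ↦ (τ z, h z)` a fixed-point-free self-map of
`I × Q`. Apply the stretching hypothesis to the image under `P` of the path in `Tᶜ`. On the sub-path
in `W` the first coordinate of `φ` takes both values `a` and `b`, so by the intermediate value
theorem it agrees somewhere with the first coordinate of the path, at a point of `T`; contradiction.

*Brouwer's theorem.* The fixed point property of `I × Q` follows by compactness from Brouwer's
theorem on Euclidean balls, proved here by the Milnor–Rogers volume argument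
(`no_contDiff_retraction`): if `f` were a `C¹` retraction of the ball onto the sphere, then
`x ↦ (1 - t) x + t f x` would be a diffeomorphism of the ball for small `t`, so the integral of its
Jacobian determinant, a polynomial in `t`, would be constantly the volume of the ball; but it
vanishes at `t = 1`.
-/

open Set

/-- A metrizable space `A` is an absolute retract if every continuous map from a
closed subset of a metric space into `A` extends continuously to the whole space. -/
def IsAbsoluteRetract (A : Type*) [TopologicalSpace A] : Prop :=
  TopologicalSpace.MetrizableSpace A ∧
  ∀ (Y : Type*) [MetricSpace Y] (M : Set Y), IsClosed M →
    ∀ f : M → A, Continuous f →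
      ∃ g : Y → A, Continuous g ∧ ∀ m : M, g m = f m

/-! ### No `C¹` retraction of the ball onto the sphere -/

section
variable {E : Type*} [NormedAddCommGroup E] [InnerProductSpace ℝ E] [FiniteDimensional ℝ E]

theorem exists_polynomial_det (M : E →L[ℝ] E) :
    ∃ p : Polynomial ℝ, p.natDegree ≤ Module.finrank ℝ E ∧
      ∀ t : ℝ, (ContinuousLinearMap.id ℝ E + t • M).det = p.eval t := by
  classical
  let b := Module.finBasis ℝ E
  let m : Matrix _ _ ℝ := LinearMap.toMatrix b b (M : E →ₗ[ℝ] E)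
  refine ⟨(((Polynomial.X : Polynomial ℝ) • m.map Polynomial.C
    + (1 : Matrix _ _ ℝ).map Polynomial.C)).det, ?_, fun t => ?_⟩
  · simpa using Polynomial.natDegree_det_X_add_C_le m 1
  · rw [ContinuousLinearMap.det, ← LinearMap.det_toMatrix b, ← Polynomial.coe_evalRingHom,
      RingHom.map_det]
    have h : LinearMap.toMatrix b b
        ((ContinuousLinearMap.id ℝ E + t • M : E →L[ℝ] E) : E →ₗ[ℝ] E) = 1 + t • m := by
      rw [ContinuousLinearMap.toLinearMap_add, ContinuousLinearMap.toLinearMap_smul, map_add,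
        map_smul, ContinuousLinearMap.coe_id, LinearMap.toMatrix_id]
    rw [h]
    congr 1
    ext i j
    rw [RingHom.mapMatrix_apply, Matrix.map_apply, Matrix.add_apply, Matrix.add_apply,
      Matrix.smul_apply, Matrix.smul_apply, Matrix.map_apply, Matrix.map_apply]
    simp only [Polynomial.coe_evalRingHom, Polynomial.eval_add, smul_eq_mul, Polynomial.eval_mul,
      Polynomial.eval_X, Polynomial.eval_C]
    rw [add_comm]

/-- The determinant is `1` at time `0` and cannot vanish while `t M` is a strict contraction. -/
theorem det_id_add_smul_pos (M : E →L[ℝ] E) (L t : ℝ) (hM : ‖M‖ ≤ L) (ht : 0 ≤ t)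
    (htL : t * L < 1) : 0 < (ContinuousLinearMap.id ℝ E + t • M).det := by
  have hne : ∀ s ∈ Icc 0 t, (ContinuousLinearMap.id ℝ E + s • M).det ≠ 0 := by
    intro s hs h0
    have : LinearMap.det ((ContinuousLinearMap.id ℝ E + s • M : E →L[ℝ] E) : E →ₗ[ℝ] E) = 0 := h0
    have hk := LinearMap.bot_lt_ker_of_det_eq_zero this
    obtain ⟨v, hv, hv0⟩ := Submodule.exists_mem_ne_zero_of_ne_bot hk.ne'
    have hv' : v + s • M v = 0 := by simpa using hv
    have h1 : ‖v‖ = s * ‖M v‖ := by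
      conv_lhs => rw [eq_neg_of_add_eq_zero_left hv']
      rw [norm_neg, norm_smul, Real.norm_of_nonneg hs.1]
    have h2 : ‖M v‖ ≤ L * ‖v‖ := (M.le_opNorm v).trans (by gcongr)
    have h3 : 0 < ‖v‖ := norm_pos_iff.2 hv0
    have hL : 0 ≤ L := (norm_nonneg _).trans hM
    have h4 : s * ‖M v‖ ≤ t * (L * ‖v‖) := mul_le_mul hs.2 h2 (norm_nonneg _) ht
    nlinarith
  obtain ⟨p, -, hp⟩ := exists_polynomial_det M
  by_contra! hneg
  have h0 : p.eval 0 = 1 := by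
    rw [← hp]; simp [ContinuousLinearMap.det]
  have := intermediate_value_Icc' ht (f := fun s => p.eval s) p.continuous.continuousOn
  obtain ⟨s, hs, hs0⟩ := this (show (0:ℝ) ∈ Icc _ _ from ⟨by rw [← hp]; exact hneg, by simp [h0]⟩)
  exact hne s hs (by rw [hp]; exact hs0)

theorem det_fderiv_eq_zero_of_norm_eq_one {f : E → E} {x : E} (hf : DifferentiableAt ℝ f x)
    (h1 : ∀ᶠ y in nhds x, ‖f y‖ = 1) : (fderiv ℝ f x).det = 0 := by
  by_contra hdet
  have hx : ‖f x‖ = 1 := h1.self_of_nhds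
  have hd : HasFDerivAt (fun y => inner ℝ (f y) (f y)) (0 : E →L[ℝ] ℝ) x := by
    refine (hasFDerivAt_const (1:ℝ) x).congr_of_eventuallyEq ?_
    filter_upwards [h1] with y hy
    rw [real_inner_self_eq_norm_sq, hy]; norm_num
  have hd2 := hf.hasFDerivAt.inner ℝ hf.hasFDerivAt
  have heq := hd2.unique hd
  have hu : IsUnit (LinearMap.det ((fderiv ℝ f x : E →L[ℝ] E) : E →ₗ[ℝ] E)) :=
    isUnit_iff_ne_zero.2 hdet
  have hsurj := ((LinearMap.equivOfIsUnitDet hu).surjective)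
  obtain ⟨v, hv⟩ := hsurj (f x)
  have hv' : fderiv ℝ f x v = f x := by simpa using hv
  have := congrArg (fun T : E →L[ℝ] ℝ => T v) heq
  simp [fderivInnerCLM_apply, hv', hx] at this

/-- A perturbation `id + t g` of the identity that fixes the unit sphere pointwise maps the closed
unit ball onto itself, for `t` small: extend `g` by zero outside the ball, which keeps it
`L`-Lipschitz, and apply the Banach fixed point theorem to `x ↦ y - t g x`. -/
theorem exists_add_smul_eq {g : E → E} {L t : ℝ} (hL : 0 ≤ L)
    (hlip : ∀ x y, ‖x‖ ≤ 1 → ‖y‖ ≤ 1 → ‖g x - g y‖ ≤ L * ‖x - y‖)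
    (h0 : ∀ x, ‖x‖ = 1 → g x = 0) (ht : 0 ≤ t) (htL : t * L < 1) (y : E) (hy : ‖y‖ ≤ 1) :
    ∃ x, ‖x‖ ≤ 1 ∧ x + t • g x = y := by
  classical
  let G : E → E := fun x => if ‖x‖ ≤ 1 then g x else 0
  have hcross : ∀ x z, ‖x‖ ≤ 1 → 1 < ‖z‖ → ‖g x‖ ≤ L * ‖x - z‖ := by
    intro x z hx hz
    -- the segment from `x` to `z` meets the sphere, where `g` vanishes
    have hc : Continuous fun s : ℝ => ‖x + s • (z - x)‖ := by fun_prop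
    obtain ⟨s, hs, hs1⟩ := intermediate_value_Icc zero_le_one hc.continuousOn
      (show (1:ℝ) ∈ Icc _ _ from ⟨by simpa using hx, by simpa using hz.le⟩)
    have h1 := hlip x (x + s • (z - x)) hx hs1.le
    rw [h0 _ hs1, sub_zero] at h1
    refine h1.trans (mul_le_mul_of_nonneg_left ?_ hL)
    rw [sub_add_cancel_left, norm_neg, norm_smul, norm_sub_rev z x, Real.norm_of_nonneg hs.1]
    exact mul_le_of_le_one_left (norm_nonneg _) hs.2
  have hG : ∀ x z, ‖G x - G z‖ ≤ L * ‖x - z‖ := by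
    intro x z
    by_cases hx : ‖x‖ ≤ 1 <;> by_cases hz : ‖z‖ ≤ 1
    · simpa [G, hx, hz] using hlip x z hx hz
    · simpa [G, hx, hz] using hcross x z hx (not_le.1 hz)
    · have := hcross z x hz (not_le.1 hx)
      rw [norm_sub_rev] at this
      simpa [G, hx, hz] using this
    · simp only [G, hx, hz, if_false, sub_zero, norm_zero]; positivity
  have hc : ContractingWith (Real.toNNReal (t * L)) (fun x => y - t • G x) := by
    refine ⟨by rwa [Real.toNNReal_lt_one], LipschitzWith.of_dist_le_mul fun x z => ?_⟩
    rw [Real.coe_toNNReal _ (mul_nonneg ht hL), dist_eq_norm, dist_eq_norm,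
      show y - t • G x - (y - t • G z) = -(t • (G x - G z)) by rw [smul_sub]; abel,
      norm_neg, norm_smul, Real.norm_of_nonneg ht, mul_assoc]
    exact mul_le_mul_of_nonneg_left (hG x z) ht
  have hfix := hc.fixedPoint_isFixedPt
  set x := ContractingWith.fixedPoint _ hc
  have hx : y - t • G x = x := hfix
  have hx1 : ‖x‖ ≤ 1 := by
    by_contra hx1
    have : G x = 0 := by simp [G, hx1]
    rw [this, smul_zero, sub_zero] at hx
    exact hx1 (hx ▸ hy)
  refine ⟨x, hx1, ?_⟩
  have : G x = g x := by simp [G, hx1]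
  rw [← this]
  nth_rewrite 1 [← hx]
  abel

open MeasureTheory in
/-- There is no `C¹` retraction of the closed unit ball onto the unit sphere. -/
theorem no_contDiff_retraction {f : E → E} (hf : ∀ x, ‖x‖ ≤ 1 → ContDiffAt ℝ 1 f x)
    (h1 : ∀ x, ‖x‖ ≤ 1 → ‖f x‖ = 1) (h2 : ∀ x, ‖x‖ = 1 → f x = x) : False := by
  borelize E
  let μ : Measure E := Measure.addHaar
  let B : Set E := Metric.ball 0 1
  have hB : ∀ x ∈ B, ‖x‖ < 1 := fun x hx => by simpa [B] using hx
  let A : E → E →L[ℝ] E := fun x => fderiv ℝ f x - ContinuousLinearMap.id ℝ E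
  have hAc : ContinuousOn A (Metric.closedBall 0 1) := by
    intro x hx
    have := ((hf x (by simpa using hx)).fderiv_right (m := 0) (by norm_num)).continuousAt
    exact (this.sub continuousAt_const).continuousWithinAt
  obtain ⟨L, hL⟩ := (isCompact_closedBall (0:E) 1).exists_bound_of_continuousOn hAc
  have hL0 : 0 ≤ L := (norm_nonneg _).trans (hL 0 (by simp))
  let g : E → E := fun x => f x - x
  have hg : ∀ x, ‖x‖ ≤ 1 → HasFDerivAt g (A x) x := fun x hx =>
    ((hf x hx).differentiableAt (by norm_num)).hasFDerivAt.sub (hasFDerivAt_id x)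
  have hlip : ∀ x y, ‖x‖ ≤ 1 → ‖y‖ ≤ 1 → ‖g x - g y‖ ≤ L * ‖x - y‖ := fun x y hx hy =>
    (convex_closedBall (0:E) 1).norm_image_sub_le_of_norm_hasFDerivWithin_le
      (fun z hz => (hg z (by simpa using hz)).hasFDerivWithinAt) hL (by simpa using hy)
      (by simpa using hx)
  -- For small `t` the map `id + t g` is a bijection of the open ball with positive Jacobian
  -- determinant, so the determinant integrates to the volume of the ball.
  have hvol : ∀ t : ℝ, 0 ≤ t → t * L < 1 → t < 1 →
      ∫ x in B, (ContinuousLinearMap.id ℝ E + t • A x).det ∂μ = μ.real B := by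
    intro t ht htL ht1
    let F : E → E := fun x => x + t • g x
    have hF : ∀ x ∈ B, HasFDerivWithinAt F (ContinuousLinearMap.id ℝ E + t • A x) B x :=
      fun x hx => ((hasFDerivAt_id x).add
        ((hg x (hB x hx).le).const_smul t)).hasFDerivWithinAt
    have hinj : InjOn F B := by
      intro x hx y hy hxy
      have hx' : ‖x‖ ≤ 1 := (hB x hx).le
      have hy' : ‖y‖ ≤ 1 := (hB y hy).le
      have h : x - y = -(t • (g x - g y)) := by
        have : x + t • g x = y + t • g y := hxy
        rw [smul_sub, neg_sub, sub_eq_sub_iff_add_eq_add, this, add_comm]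
      have h3 : ‖x - y‖ ≤ t * (L * ‖x - y‖) := by
        conv_lhs => rw [h]
        rw [norm_neg, norm_smul, Real.norm_of_nonneg ht]
        exact mul_le_mul_of_nonneg_left (hlip x y hx' hy') ht
      have h4 : ‖x - y‖ = 0 := by
        by_contra h5
        have : 0 < ‖x - y‖ := lt_of_le_of_ne (norm_nonneg _) (Ne.symm h5)
        nlinarith
      exact sub_eq_zero.1 (norm_eq_zero.1 h4)
    have himg : F '' B = B := by
      apply Subset.antisymm
      · rintro _ ⟨x, hx, rfl⟩
        have hx' : ‖x‖ < 1 := by simpa [B] using hx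
        have : F x = (1 - t) • x + t • f x := by
          simp only [F, g, smul_sub, sub_smul, one_smul]; abel
        have h3 : ‖F x‖ ≤ (1 - t) * ‖x‖ + t * 1 := by
          rw [this]
          refine (norm_add_le _ _).trans ?_
          rw [norm_smul, norm_smul, Real.norm_of_nonneg ht, Real.norm_of_nonneg (by linarith),
            h1 x hx'.le]
        have : ‖F x‖ < 1 := by nlinarith
        simpa [B] using this
      · intro y hy
        have hy' : ‖y‖ < 1 := by simpa [B] using hy
        have hg0 : ∀ x, ‖x‖ = 1 → g x = 0 := fun x hx => by simp [g, h2 x hx]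
        obtain ⟨x, hx, hxy⟩ := exists_add_smul_eq hL0 hlip hg0 ht htL y hy'.le
        refine ⟨x, ?_, hxy⟩
        rcases hx.lt_or_eq with h | h
        · simpa [B] using h
        · rw [hg0 x h, smul_zero, add_zero] at hxy
          rw [hxy] at h; exact absurd h hy'.ne
    have := integral_image_eq_integral_abs_det_fderiv_smul μ
      (Metric.isOpen_ball.measurableSet : MeasurableSet B) hF hinj (fun _ => (1:ℝ))
    rw [himg] at this
    simp only [smul_eq_mul, mul_one, integral_const, measureReal_restrict_apply_univ] at this
    rw [this]
    refine setIntegral_congr_fun Metric.isOpen_ball.measurableSet fun x hx => ?_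
    exact (abs_of_pos (det_id_add_smul_pos (A x) L t (hL x (Metric.ball_subset_closedBall hx))
      ht htL)).symm
  -- The determinant is a polynomial in `t` of degree at most `d`, so its value at `t = 1` is
  -- recovered by Lagrange interpolation from `d + 1` nodes in the range where `hvol` applies.
  let d := Module.finrank ℝ E
  let v : ℕ → ℝ := fun i => i / ((d + 1) * (L + 1))
  have hv0 : ∀ i, 0 ≤ v i := fun i => by positivity
  have hvinj : Function.Injective v := by
    intro i j hij
    have hne : ((d:ℝ) + 1) * (L + 1) ≠ 0 := by positivity
    exact_mod_cast (div_left_inj' hne).1 hij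
  have hvlt : ∀ i ∈ Finset.range (d + 1), v i * (L + 1) < 1 := by
    intro i hi
    have : (i:ℝ) < d + 1 := by exact_mod_cast Finset.mem_range.1 hi
    have hd : (0:ℝ) < d + 1 := by positivity
    have : v i * (L + 1) = i / (d + 1) := by simp only [v]; field_simp
    rwa [this, div_lt_one hd]
  have hsum : ∀ M : E →L[ℝ] E, (ContinuousLinearMap.id ℝ E + M).det =
      ∑ i ∈ Finset.range (d + 1), (ContinuousLinearMap.id ℝ E + v i • M).det *
        (Lagrange.basis (Finset.range (d + 1)) v i).eval 1 := by
    intro M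
    obtain ⟨p, hpd, hp⟩ := exists_polynomial_det M
    have hlt : p.degree < (Finset.range (d + 1)).card := by
      rw [Finset.card_range]
      exact (Polynomial.degree_le_of_natDegree_le hpd).trans_lt (by exact_mod_cast Nat.lt_succ_self d)
    have h := Lagrange.eq_interpolate (hvinj.injOn) hlt
    have h' := congrArg (Polynomial.eval 1) h
    rw [← hp, one_smul] at h'
    rw [h', Lagrange.interpolate_apply, Polynomial.eval_finsetSum]
    simp [hp]
  have hint : ∀ t : ℝ, IntegrableOn (fun x => (ContinuousLinearMap.id ℝ E + t • A x).det) B μ := by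
    intro t
    have hc : ContinuousOn (fun x => (ContinuousLinearMap.id ℝ E + t • A x).det)
        (Metric.closedBall 0 1) :=
      ContinuousLinearMap.continuous_det.comp_continuousOn
        (continuousOn_const.add (hAc.const_smul t))
    exact (hc.integrableOn_compact (isCompact_closedBall _ _)).mono_set
      Metric.ball_subset_closedBall
  have key : ∫ x in B, (fderiv ℝ f x).det ∂μ = μ.real B := by
    have e1 : ∀ x, (fderiv ℝ f x).det = ∑ i ∈ Finset.range (d + 1),
        (ContinuousLinearMap.id ℝ E + v i • A x).det *
        (Lagrange.basis (Finset.range (d + 1)) v i).eval 1 := by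
      intro x
      rw [← hsum (A x)]; simp [A]
    simp_rw [e1]
    rw [integral_finsetSum _ (fun i _ => (hint (v i)).mul_const _)]
    simp_rw [integral_mul_const]
    rw [Finset.sum_congr rfl (fun i hi => by
      rw [hvol (v i) (hv0 i) (by nlinarith [hvlt i hi, hv0 i]) (by nlinarith [hvlt i hi, hv0 i])]),
      ← Finset.mul_sum, ← Polynomial.eval_finsetSum, Lagrange.sum_basis hvinj.injOn (by simp)]
    simp
  have key0 : ∫ x in B, (fderiv ℝ f x).det ∂μ = 0 := by
    refine setIntegral_eq_zero_of_forall_eq_zero fun x hx => ?_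
    refine det_fderiv_eq_zero_of_norm_eq_one
      ((hf x (hB x hx).le).differentiableAt (by norm_num)) ?_
    filter_upwards [Metric.isOpen_ball.mem_nhds hx] with y hy
    exact h1 y (hB y hy).le
  have hpos : 0 < μ.real B :=
    ENNReal.toReal_pos (Metric.measure_ball_pos μ 0 one_pos).ne' measure_ball_lt_top.ne
  linarith

/-! ### Brouwer's fixed point theorem -/

/-- A fixed-point-free `C¹` self-map `g` of the ball would give a `C¹` retraction onto the sphere:
send `x` to the point where the ray from `g x` through `x` leaves the ball. -/
theorem brouwer_contDiff {g : E → E} (hg : ContDiff ℝ 1 g) (hg1 : ∀ x, ‖g x‖ ≤ 1) :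
    ∃ x, ‖x‖ ≤ 1 ∧ g x = x := by
  by_contra! hne
  let u : E → E := fun x => x - g x
  let p : E → ℝ := fun x => inner ℝ x (u x)
  let q : E → ℝ := fun x => inner ℝ (u x) (u x)
  let D : E → ℝ := fun x => p x ^ 2 + (1 - inner ℝ x x) * q x
  have hq : ∀ x, ‖x‖ ≤ 1 → 0 < q x := fun x hx =>
    real_inner_self_pos.2 (sub_ne_zero.2 (hne x hx).symm)
  have hp : ∀ x, ‖x‖ = 1 → 0 < p x := by
    intro x hx
    have h1 := hq x hx.le
    have h2 : 2 * p x = q x + ‖x‖ ^ 2 - ‖g x‖ ^ 2 := by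
      simp only [p, q, u, inner_sub_left, inner_sub_right, real_inner_self_eq_norm_sq,
        real_inner_comm x (g x)]
      ring
    have h3 : ‖g x‖ ^ 2 ≤ 1 := pow_le_one₀ (norm_nonneg _) (hg1 x)
    rw [hx] at h2
    linarith
  have hD : ∀ x, ‖x‖ ≤ 1 → 0 < D x := by
    intro x hx
    rcases hx.lt_or_eq with h | h
    · have : inner ℝ x x < 1 := by
        rw [real_inner_self_eq_norm_sq]; exact pow_lt_one₀ (norm_nonneg _) h (by norm_num)
      have := mul_pos (sub_pos.2 this) (hq x hx)
      simp only [D]; positivity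
    · have h2 : inner ℝ x x = 1 := by rw [real_inner_self_eq_norm_sq, h]; norm_num
      have := hp x h
      simp only [D, h2, sub_self, zero_mul, add_zero]; positivity
  have hu : ContDiff ℝ 1 u := contDiff_id.sub hg
  have hpc : ContDiff ℝ 1 p := contDiff_id.inner ℝ hu
  have hqc : ContDiff ℝ 1 q := hu.inner ℝ hu
  have hDc : ContDiff ℝ 1 D :=
    (hpc.pow 2).add ((contDiff_const.sub (contDiff_id.inner ℝ contDiff_id)).mul hqc)
  -- the nonnegative root of `‖x + t u‖ ^ 2 = 1`, a quadratic equation with discriminant `4 D`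
  let t : E → ℝ := fun x => (-p x + √(D x)) / q x
  refine no_contDiff_retraction (f := fun x => x + t x • u x) (fun x hx => ?_)
    (fun x hx => ?_) (fun x hx => ?_)
  · have ht : ContDiffAt ℝ 1 t x :=
      (hpc.contDiffAt.neg.add (hDc.contDiffAt.sqrt (hD x hx).ne')).div hqc.contDiffAt (hq x hx).ne'
    exact contDiffAt_id.add (ht.smul hu.contDiffAt)
  · have h1 : ‖x + t x • u x‖ ^ 2 = inner ℝ x x + 2 * t x * p x + t x ^ 2 * q x := by
      rw [← real_inner_self_eq_norm_sq]
      simp only [inner_add_left, inner_add_right, real_inner_smul_left, real_inner_smul_right, p, q,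
        real_inner_comm x (u x)]
      ring
    have h2 : t x * q x = -p x + √(D x) := div_mul_cancel₀ _ (hq x hx).ne'
    have h3 : √(D x) ^ 2 = p x ^ 2 + (1 - inner ℝ x x) * q x := Real.sq_sqrt (hD x hx).le
    have h4 : ‖x + t x • u x‖ ^ 2 = 1 := by
      apply mul_right_cancel₀ (hq x hx).ne'
      have : √(D x) = t x * q x + p x := by linarith
      rw [this] at h3
      rw [h1]; linarith
    exact (sq_eq_sq₀ (norm_nonneg _) zero_le_one).1 (by rw [h4]; norm_num)
  · have h2 : inner ℝ x x = 1 := by rw [real_inner_self_eq_norm_sq, hx]; norm_num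
    have : √(D x) = p x := by
      simp only [D, h2, sub_self, zero_mul, add_zero]
      exact Real.sqrt_sq (hp x hx).le
    simp [t, this]

open scoped Manifold in
/-- Brouwer's theorem for continuous maps, from the `C¹` case: a smooth approximation closer than
the least displacement of `G` on the ball would have no fixed point either. -/
theorem brouwer_ball {G : E → E} (hG : Continuous G) (hG1 : ∀ x, ‖G x‖ ≤ 1) :
    ∃ x, G x = x := by
  by_contra! hne
  obtain ⟨x₀, -, hx₀⟩ := (isCompact_closedBall (0:E) 1).exists_isMinOn ⟨0, by simp⟩
    (f := fun x => dist (G x) x) (by fun_prop)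
  have hδ : 0 < dist (G x₀) x₀ := dist_pos.2 (hne x₀)
  set δ := dist (G x₀) x₀
  obtain ⟨g, hg⟩ := exists_contMDiffMap_forall_mem_convex_of_local_const (n := 1) 𝓘(ℝ, E)
    (t := fun x : E => Metric.ball (G x) δ ∩ Metric.closedBall (0:E) 1)
    (fun x => (convex_ball _ _).inter (convex_closedBall _ _)) (fun x => ⟨G x, by
      have : ∀ᶠ y in nhds x, dist (G y) (G x) < δ :=
        hG.continuousAt.eventually (Metric.ball_mem_nhds (G x) hδ)
      filter_upwards [this] with y hy
      exact ⟨by rwa [Metric.mem_ball, dist_comm], by simpa using hG1 x⟩⟩)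
  obtain ⟨x, hx, hgx⟩ := brouwer_contDiff (g := g) g.contMDiff.contDiff
    (fun x => by simpa using (hg x).2)
  have h1 := (hg x).1
  rw [hgx, Metric.mem_ball, dist_comm] at h1
  exact absurd (hx₀ (show x ∈ Metric.closedBall 0 1 by simpa using hx)) (not_le.2 h1)
end

/-! ### Fixed points in the Hilbert cube -/

section
open unitInterval

theorem exists_fixedPoint_hilbertCube {G : (ℕ → I) → (ℕ → I)} (hG : Continuous G) :
    ∃ y, G y = y := by
  -- For each `n`, Brouwer's theorem on `ℝⁿ` fixes the first `n` coordinates. The factor `n + 1`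
  -- scales the cube `[0,1]ⁿ` into the unit ball.
  have hfin : ∀ n : ℕ, ∃ y, ∀ i < n, G y i = y i := by
    intro n
    have hs : (0:ℝ) < n + 1 := by positivity
    let ι : EuclideanSpace ℝ (Fin n) → ℕ → I := fun x i =>
      if h : i < n then projIcc 0 1 zero_le_one ((n + 1) * x ⟨i, h⟩) else 0
    have hι : Continuous ι := by
      refine continuous_pi fun i => ?_
      by_cases h : i < n
      · simp only [ι, h, dif_pos]
        exact continuous_projIcc.comp (by fun_prop)
      · simp only [ι, h, dif_neg, not_false_eq_true]
        exact continuous_const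
    obtain ⟨x, hx⟩ := brouwer_ball (E := EuclideanSpace ℝ (Fin n))
      (G := fun x => WithLp.toLp 2 fun i : Fin n => (G (ι x) i : ℝ) / (n + 1)) (by fun_prop) (by
        intro x
        rw [EuclideanSpace.norm_eq, Real.sqrt_le_one]
        calc ∑ i : Fin n, ‖((G (ι x) i : ℝ) / (n + 1))‖ ^ 2 ≤ ∑ i : Fin n, (1 / (n + 1) : ℝ) := by
              refine Finset.sum_le_sum fun i _ => ?_
              have h0 := (G (ι x) i).2.1
              have h1 := (G (ι x) i).2.2
              rw [Real.norm_of_nonneg (by positivity), div_pow]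
              rw [div_le_div_iff₀ (by positivity) hs]
              have : (G (ι x) i : ℝ) ^ 2 ≤ 1 := pow_le_one₀ h0 h1
              nlinarith
          _ ≤ 1 := by
              rw [Finset.sum_const, Finset.card_univ, Fintype.card_fin, nsmul_eq_mul,
                mul_one_div, div_le_one hs]
              linarith)
    refine ⟨ι x, fun i hi => ?_⟩
    have h1 : (G (ι x) i : ℝ) / (n + 1) = x ⟨i, hi⟩ :=
      congrArg (fun v : EuclideanSpace ℝ (Fin n) => v ⟨i, hi⟩) hx
    have h2 : ((n:ℝ) + 1) * x ⟨i, hi⟩ = G (ι x) i := by rw [← h1]; field_simp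
    have h3 : ι x i = projIcc 0 1 zero_le_one (((n:ℝ) + 1) * x ⟨i, hi⟩) := by simp [ι, hi]
    rw [h3, h2, projIcc_val]
  have hcl : ∀ n : ℕ, IsClosed {y | ∀ i < n, G y i = y i} := fun n => by
    simp only [ofPred_forall]
    exact isClosed_iInter fun i => isClosed_iInter fun _ =>
      isClosed_eq ((continuous_apply i).comp hG) (continuous_apply i)
  obtain ⟨y, hy⟩ := IsCompact.nonempty_iInter_of_sequence_nonempty_isCompact_isClosed
    (fun n : ℕ => {y | ∀ i < n, G y i = y i}) (fun n y hy i hi => hy i (hi.trans n.lt_succ_self))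
    hfin (hcl 0).isCompact hcl
  exact ⟨y, funext fun i => mem_iInter.1 hy (i + 1) i i.lt_succ_self⟩

theorem exists_fixedPoint_cylinder {G : I × (ℕ → I) → I × (ℕ → I)} (hG : Continuous G) :
    ∃ z, G z = z := by
  let e : (ℕ → I) → I × (ℕ → I) := fun u => (u 0, fun n => u (n + 1))
  have he : Continuous e := by fun_prop
  obtain ⟨u, hu⟩ := exists_fixedPoint_hilbertCube
    (G := fun u n => Nat.casesOn n (G (e u)).1 (G (e u)).2) (by
      refine continuous_pi fun n => ?_
      cases n with
      | zero => exact (hG.comp he).fst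
      | succ n => exact (continuous_apply n).comp (hG.comp he).snd)
  exact ⟨e u, Prod.ext (congrFun hu 0) (funext fun n => congrFun hu (n + 1))⟩

/-! ### Crossing paths -/

/-- Every open neighbourhood `O` of the solution set of the parametrized fixed point equation
`h (t, q) = q` contains a path joining the two bases `t = 0` and `t = 1` of the cylinder. -/
theorem exists_path_of_section {h : I × (ℕ → I) → ℕ → I} (hh : Continuous h)
    {O : Set (I × (ℕ → I))} (hO : IsOpen O) (hS : ∀ z, h z = z.2 → z ∈ O) :
    ∃ x y, x.1 = 0 ∧ y.1 = 1 ∧ JoinedIn O x y := by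
  have : LocallyPathConnectedSpace I := (convex_Icc (0:ℝ) 1).locallyPathConnectedSpace
  have : PathConnectedSpace I := isPathConnected_iff_pathConnectedSpace.1
    ((convex_Icc (0:ℝ) 1).isPathConnected ⟨0, by simp⟩)
  by_contra! hno
  -- `U` is the part of `O` reachable from the left base; `V ⊇ O \ U` is open and disjoint from `U`
  let U : Set (I × (ℕ → I)) := ⋃ y ∈ {y | y.1 = 0}, pathComponentIn O y
  have hU : IsOpen U := isOpen_biUnion fun y _ => hO.pathComponentIn y
  let V : Set (I × (ℕ → I)) := ⋃ y ∈ {y | y ∉ U}, pathComponentIn O y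
  have hV : IsOpen V := isOpen_biUnion fun y _ => hO.pathComponentIn y
  have hUV : Disjoint U V := by
    rw [Set.disjoint_left]
    intro z hzU hzV
    obtain ⟨y, hy, hyz⟩ := mem_iUnion₂.1 hzU
    obtain ⟨y', hy', hyz'⟩ := mem_iUnion₂.1 hzV
    exact hy' (mem_iUnion₂.2 ⟨y, hy, JoinedIn.trans hyz (JoinedIn.symm hyz')⟩)
  have hSc : IsClosed {z | h z = z.2} := isClosed_eq hh continuous_snd
  have hcov : ∀ z, h z = z.2 → z ∉ U → z ∈ V := fun z hz hzU =>
    mem_iUnion₂.2 ⟨z, hzU, mem_pathComponentIn_self (hS z hz)⟩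
  obtain ⟨τ, hτ0, hτ1, hτ⟩ := exists_continuous_zero_one_of_isClosed
    (hSc.sdiff hU) (hSc.sdiff hV) (by
      rw [Set.disjoint_left]
      rintro z ⟨hz, hzU⟩ ⟨-, hzV⟩
      exact hzV (hcov z hz hzU))
  obtain ⟨z, hz⟩ := exists_fixedPoint_cylinder
    (G := fun z => (⟨τ z, hτ z⟩, h z)) (by fun_prop)
  have hzS : h z = z.2 := congrArg Prod.snd hz
  have hz1 : (τ z : ℝ) = z.1 := congrArg (fun w => (w.1 : ℝ)) hz
  by_cases hzU : z ∈ U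
  · have : τ z = 1 := hτ1 ⟨hzS, Set.disjoint_left.1 hUV hzU⟩
    obtain ⟨y, hy, hyz⟩ := mem_iUnion₂.1 hzU
    exact hno y z hy (Subtype.ext (by rw [← hz1, this]; rfl)) hyz
  · have : τ z = 0 := hτ0 ⟨hzS, hzU⟩
    have hz0 : z.1 = 0 := Subtype.ext (by rw [← hz1, this]; rfl)
    exact hzU (mem_iUnion₂.2 ⟨z, hz0, mem_pathComponentIn_self (hS z hzS)⟩)

/-! ### Reduction from absolute retracts to the Hilbert cube -/

/-- A compact subset of an absolute retract `A` embeds into the Hilbert cube by a map whose inverse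
extends to the whole cube. The test spaces in `IsAbsoluteRetract` live in an arbitrary universe
`v`, so the extension property is applied to a `ULift` of the cube. -/
theorem IsAbsoluteRetract.exists_hilbertCube_section.{u, v} {A : Type u} [TopologicalSpace A]
    (hAR : IsAbsoluteRetract.{u, v} A) {K : Set A} (hK : IsCompact K) :
    ∃ (F : K → ℕ → I) (r : (ℕ → I) → A), Continuous F ∧ Continuous r ∧ ∀ k, r (F k) = k := by
  have := hAR.1
  let : MetricSpace A := TopologicalSpace.metrizableSpaceMetric A
  have : CompactSpace K := isCompact_iff_compactSpace.1 hK
  obtain ⟨F, hF⟩ := Metric.PiNatEmbed.exists_embedding_to_hilbert_cube (X := K)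
  have hR : IsClosed (range F) := (isCompact_range hF.continuous).isClosed
  have : TopologicalSpace.MetrizableSpace (ULift.{v} (ℕ → I)) :=
    Homeomorph.ulift.isEmbedding.metrizableSpace
  let : MetricSpace (ULift.{v} (ℕ → I)) := TopologicalSpace.metrizableSpaceMetric _
  let M : Set (ULift.{v} (ℕ → I)) := ULift.down ⁻¹' range F
  obtain ⟨g, hg, hgM⟩ := hAR.2 (ULift.{v} (ℕ → I)) M (hR.preimage continuous_uliftDown)
    (fun m => (hF.toHomeomorph.symm ⟨m.1.down, m.2⟩ : K)) (by
      refine continuous_subtype_val.comp (hF.toHomeomorph.symm.continuous.comp ?_)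
      exact (continuous_uliftDown.comp continuous_subtype_val).subtype_mk _)
  refine ⟨F, fun q => g ⟨q⟩, hF.continuous, hg.comp continuous_uliftUp, fun k => ?_⟩
  have h1 := hgM ⟨⟨F k⟩, k, rfl⟩
  refine h1.trans ?_
  exact congrArg Subtype.val (hF.toHomeomorph.symm_apply_apply k)

end

/-- **Corollary 2.4: stretching along paths on a cylinder with base an absolute retract.** -/
theorem fixed_point_cylinder_AR
    {A : Type*} [TopologicalSpace A] (hAR : IsAbsoluteRetract A)
    (a b : ℝ) (hab : a < b)
    (D : Set (ℝ × A)) (hD : D ⊆ Icc a b ×ˢ (univ : Set A))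
    (φ : ℝ × A → ℝ × A)
    (W : Set (ℝ × A)) (hW_closed : IsClosed W) (hW_sub : W ⊆ D)
    -- (i) φ is compact on W
    (hφ_cont : ContinuousOn φ W) (hφ_comp : IsCompact (closure (φ '' W)))
    -- (ii) stretching along the paths
    (hstretch : ∀ σ : ℝ → ℝ × A, ContinuousOn σ (Icc (0:ℝ) 1) →
      σ '' Icc (0:ℝ) 1 ⊆ Icc a b ×ˢ (univ : Set A) →
      (σ '' Icc (0:ℝ) 1 ∩ ({a} : Set ℝ) ×ˢ (univ : Set A)).Nonempty →
      (σ '' Icc (0:ℝ) 1 ∩ ({b} : Set ℝ) ×ˢ (univ : Set A)).Nonempty →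
      ∃ s₀ s₁ : ℝ, 0 ≤ s₀ ∧ s₀ ≤ s₁ ∧ s₁ ≤ 1 ∧
        σ '' Icc s₀ s₁ ⊆ W ∧
        φ '' (σ '' Icc s₀ s₁) ⊆ Icc a b ×ˢ (univ : Set A) ∧
        (φ '' (σ '' Icc s₀ s₁) ∩ ({a} : Set ℝ) ×ˢ (univ : Set A)).Nonempty ∧
        (φ '' (σ '' Icc s₀ s₁) ∩ ({b} : Set ℝ) ×ˢ (univ : Set A)).Nonempty) :
    ∃ z ∈ W, φ z = z := by
  by_contra! hne
  have hK : IsCompact (Prod.snd '' closure (φ '' W)) := hφ_comp.image continuous_snd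
  obtain ⟨F, r, hF, hr, hrF⟩ := hAR.exists_hilbertCube_section hK
  let P : unitInterval × (ℕ → unitInterval) → ℝ × A := fun z => (a + (b - a) * z.1, r z.2)
  have hP : Continuous P := by fun_prop
  have hPC : ∀ z, P z ∈ Icc a b ×ˢ (univ : Set A) := by
    intro z
    have h0 : (0:ℝ) ≤ z.1 := z.1.2.1
    have h1 : (z.1:ℝ) ≤ 1 := z.1.2.2
    exact ⟨⟨by simp only [P]; nlinarith, by simp only [P]; nlinarith⟩, trivial⟩
  let W' : Set (unitInterval × (ℕ → unitInterval)) := P ⁻¹' W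
  have hW' : IsClosed W' := hW_closed.preimage hP
  have hφP : ContinuousOn (fun z => φ (P z)) W' := hφ_cont.comp hP.continuousOn fun z hz => hz
  have hmem : ∀ z : W', (φ (P z)).2 ∈ Prod.snd '' closure (φ '' W) := fun z =>
    ⟨_, subset_closure ⟨_, z.2, rfl⟩, rfl⟩
  have hφP' : Continuous fun z : W' => φ (P z) := continuousOn_iff_continuous_domRestrict.1 hφP
  obtain ⟨h, hh⟩ := ContinuousMap.exists_restrict_eq hW'
    ⟨fun z : W' => F ⟨(φ (P z)).2, hmem z⟩, hF.comp (hφP'.snd.subtype_mk _)⟩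
  have hhW : ∀ z (hz : z ∈ W'), h z = F ⟨(φ (P z)).2, hmem ⟨z, hz⟩⟩ := fun z hz =>
    congrArg (fun k => k ⟨z, hz⟩) hh
  -- points of the cylinder where `φ ∘ P` and `P` agree in the first coordinate
  let T : Set (unitInterval × (ℕ → unitInterval)) := W' ∩ {z | (φ (P z)).1 = (P z).1}
  have hT : IsClosed T := by
    have := (hφP.fst.sub hP.fst.continuousOn).preimage_isClosed_of_isClosed hW'
      (isClosed_singleton (x := (0:ℝ)))
    convert this using 1
    ext z
    simp [T, sub_eq_zero]
  obtain ⟨x, y, hx, hy, γ, hγ⟩ := exists_path_of_section h.continuous hT.isOpen_compl (by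
    rintro z hz ⟨hzW, hz1⟩
    refine hne (P z) hzW (Prod.ext hz1 ?_)
    rw [hhW z hzW] at hz
    simpa only [hrF] using congrArg r hz)
  let σ : ℝ → ℝ × A := fun s => P (γ.extend s)
  have hσ : Continuous σ := hP.comp γ.continuous_extend
  obtain ⟨s₀, s₁, h0, h01, h1, hsW, -, ⟨_, ⟨_, ⟨c, hc, rfl⟩, rfl⟩, hca⟩,
    ⟨_, ⟨_, ⟨d, hd, rfl⟩, rfl⟩, hdb⟩⟩ := hstretch σ hσ.continuousOn
      (by rintro _ ⟨s, -, rfl⟩; exact hPC _)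
      ⟨σ 0, ⟨0, by simp, rfl⟩, by simp [σ, P, hx]⟩
      ⟨σ 1, ⟨1, by simp, rfl⟩, by simp [σ, P, hy]⟩
  -- the intermediate value theorem produces a point of `T` on the path `γ`
  have hcont : ContinuousOn (fun s => (φ (σ s)).1 - (σ s).1) (Icc s₀ s₁) :=
    (hφ_cont.comp hσ.continuousOn fun s hs => hsW ⟨s, hs, rfl⟩).fst.sub hσ.fst.continuousOn
  obtain ⟨s, hs, hs0⟩ := isPreconnected_Icc.intermediate_value hc hd hcont
    (show (0:ℝ) ∈ Icc _ _ from
      ⟨by have := (hPC (γ.extend c)).1.1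
          have e : (φ (σ c)).1 = a := hca.1
          rw [e]; exact sub_nonpos.2 this,
       by have := (hPC (γ.extend d)).1.2
          have e : (φ (σ d)).1 = b := hdb.1
          rw [e]; exact sub_nonneg.2 this⟩)
  have hs' : s ∈ Icc (0:ℝ) 1 := ⟨h0.trans hs.1, hs.2.trans h1⟩
  refine hγ ⟨s, hs'⟩ ⟨?_, ?_⟩
  · have := hsW ⟨s, hs, rfl⟩
    simpa [W', σ, γ.extend_apply hs'] using this
  · have := sub_eq_zero.1 hs0
    simpa [σ, γ.extend_apply hs'] using this
end

section
/- Let C be a closed, convex and nonempty subset of a normed linear space X. Then any compact map φ : C → C has a fixed point in C, i.e. there exists x ∈ C with φ(x) = x. -/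
/-!
The proof reduces Schauder's theorem to Brouwer's theorem on the standard simplex, which is in turn
deduced from a combinatorial lemma of Scarf.

*Scarf's lemma* (`exists_dominant_rainbow`). Let a finite set `P` carry one ranking for each `i` in
a finite set `I`, and call `σ ⊆ P` dominant if no point of `P` lies above the lowest member of `σ`
in every ranking. Colour `P` by `I`, with one vertex `e i` of colour `i` at each corner. Then some
dominant set of size `card I` carries all colours. Dominant sets of this size behave like the top
cells of a triangulation: a dominant set of size `card I - 1` lies in exactly two of them
(`exists_two_extensions`), apart from the outer facets; the one whose colours are all but a fixed
`i₀` lies in just one. Counting incidences between the cells and their facets with colours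
`I \ {i₀}` modulo 2, as in Sperner's lemma, gives the claim.

*Brouwer's theorem* (`exists_fixedPoint_stdSimplex`). Rank the points of a grid in the simplex by
their coordinates, and colour `x` by an `i` with `x i ≤ f x i`. A dominant set has diameter at most
a constant times the mesh, because otherwise a grid point above all its minima would exist; so a
dominant set with all colours is close to a point `t` with `t i ≤ f t i + ε` for all `i`. Both `t`
and `f t` have coordinate sum `1`, so compactness yields a fixed point.

*Schauder's theorem*. Composing `φ` with a partition of unity on a finite `ε`-net of the compact set
`closure (φ '' C)` gives a self-map of a simplex, whose fixed point is an `ε`-approximate fixed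
point of `φ`. Compactness then gives a genuine one.
-/

/-! ### Dominant sets and their extensions -/

/-- Each `r i` ranks the points of `P`. The set `σ` is dominant when no point of `P` beats,
in every ranking simultaneously, the lowest-ranked member of `σ`. -/
def Dominant {P I : Type*} (r : I → P → ℕ) (σ : Finset P) : Prop :=
  ∀ y, ∃ i, ∀ x ∈ σ, r i y ≤ r i x

theorem Dominant.mono {P I : Type*} {r : I → P → ℕ} {σ τ : Finset P}
    (h : Dominant r σ) (hs : τ ⊆ σ) : Dominant r τ := fun y => by
  obtain ⟨i, hi⟩ := h y
  exact ⟨i, fun x hx => hi x (hs hx)⟩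

/-- Here `m i` is the `r i`-lowest member of `τ`. If `τ` is still exhausted by the `m i` with
`i ≠ a`, there is exactly one way to extend `τ` to a dominant set by a point lying strictly above
`m i` for all `i ≠ a`: take the `r a`-highest such point. -/
theorem exists_unique_extension {P I : Type*} [Fintype P] [DecidableEq P]
    {r : I → P → ℕ} (hr : ∀ i, Function.Injective (r i)) {τ : Finset P} {m : I → P}
    (hm : ∀ i, m i ∈ τ) (hmin : ∀ i, ∀ x ∈ τ, r i (m i) ≤ r i x) (hD : Dominant r τ) (a : I)
    (hne : ∃ y, ∀ i, i ≠ a → r i (m i) < r i y) (hsurj : ∀ z ∈ τ, ∃ i, i ≠ a ∧ m i = z) :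
    ∃ x, x ∉ τ ∧ (∀ i, i ≠ a → r i (m i) < r i x) ∧ Dominant r (insert x τ) ∧
      ∀ x', (∀ i, i ≠ a → r i (m i) < r i x') → Dominant r (insert x' τ) → x' = x := by
  classical
  obtain ⟨y₀, hy₀⟩ := hne
  obtain ⟨x, hx, hmax⟩ := (Finset.univ.filter
    fun y => ∀ i, i ≠ a → r i (m i) < r i y).exists_max_image (r a) ⟨y₀, by simpa using hy₀⟩
  simp only [Finset.mem_filter, Finset.mem_univ, true_and] at hx hmax
  refine ⟨x, ?_, hx, ?_, ?_⟩
  · intro hxτ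
    obtain ⟨i, hia, rfl⟩ := hsurj x hxτ
    exact lt_irrefl _ (hx i hia)
  · intro y
    by_cases hy : ∀ i, i ≠ a → r i (m i) < r i y
    · refine ⟨a, fun z hz => ?_⟩
      rcases Finset.mem_insert.1 hz with rfl | hz
      · exact hmax y hy
      · obtain ⟨i, hi⟩ := hD y
        by_cases hia : i = a
        · exact hia ▸ hi z hz
        · exact absurd (hi _ (hm i)) (not_le.2 (hy i hia))
    · push Not at hy
      obtain ⟨i, hia, hi⟩ := hy
      refine ⟨i, fun z hz => ?_⟩
      rcases Finset.mem_insert.1 hz with rfl | hz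
      · exact hi.trans (hx i hia).le
      · exact hi.trans (hmin i z hz)
  · intro x' hx' hD'
    obtain ⟨i, hi⟩ := hD' x
    have hia : i = a := by
      by_contra hia
      exact absurd (hi _ (Finset.mem_insert_of_mem (hm i))) (not_le.2 (hx i hia))
    subst hia
    exact hr i (le_antisymm (hmax x' hx') (hi x' (Finset.mem_insert_self _ _)))

/-- A dominant set one element short of full size has exactly two dominant extensions by one point,
provided that for each `a` there is a point which, in every ranking but the one indexed by `a`, lies
above some member of the set. The map `i ↦ m i` hits one member twice, say at `a` and `b`, and the
two extensions are those given by `exists_unique_extension` for `a` and for `b`. -/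
theorem exists_two_extensions {P I : Type*} [Fintype P] [DecidableEq P] [Fintype I]
    {r : I → P → ℕ} (hr : ∀ i, Function.Injective (r i)) {τ : Finset P}
    (hne : τ.Nonempty) (hcard : τ.card + 1 = Fintype.card I) (hD : Dominant r τ)
    (hM : ∀ a, ∃ y, ∀ i, i ≠ a → ∃ z ∈ τ, r i z < r i y) :
    ∃ x₁ x₂, x₁ ≠ x₂ ∧ ∀ x, (x ∉ τ ∧ Dominant r (insert x τ)) ↔ x = x₁ ∨ x = x₂ := by
  classical
  have hmin' : ∀ i, ∃ p ∈ τ, ∀ x ∈ τ, r i p ≤ r i x := fun i => τ.exists_min_image (r i) hne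
  choose m hm hmin using hmin'
  have hM' : ∀ a, ∃ y, ∀ i, i ≠ a → r i (m i) < r i y := fun a => by
    obtain ⟨y, hy⟩ := hM a
    refine ⟨y, fun i hi => ?_⟩
    obtain ⟨z, hz, hzy⟩ := hy i hi
    exact (hmin i z hz).trans_lt hzy
  have hs : ∀ z ∈ τ, ∃ i, m i = z := fun z hz => by
    obtain ⟨i, hi⟩ := hD z
    exact ⟨i, hr i (le_antisymm (hmin i z hz) (hi _ (hm i)))⟩
  obtain ⟨a, -, b, -, hab, hmab⟩ := Finset.exists_ne_map_eq_of_card_lt_of_maps_to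
    (s := Finset.univ) (t := τ) (f := m) (by rw [Finset.card_univ]; omega)
    (fun i _ => hm i)
  have hsa : ∀ z ∈ τ, ∃ i, i ≠ a ∧ m i = z := fun z hz => by
    obtain ⟨i, hi⟩ := hs z hz
    by_cases h : i = a
    · exact ⟨b, hab.symm, by rw [← hmab, ← h, hi]⟩
    · exact ⟨i, h, hi⟩
  have hsb : ∀ z ∈ τ, ∃ i, i ≠ b ∧ m i = z := fun z hz => by
    obtain ⟨i, hi⟩ := hs z hz
    by_cases h : i = b
    · exact ⟨a, hab, by rw [hmab, ← h, hi]⟩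
    · exact ⟨i, h, hi⟩
  have hinj : ∀ c, (∀ z ∈ τ, ∃ i, i ≠ c ∧ m i = z) →
      ∀ i j, i ≠ c → j ≠ c → m i = m j → i = j := by
    intro c hc i j hi hj hij
    have hinjOn : Set.InjOn m (Finset.univ.erase c : Finset I) := by
      apply Finset.injOn_of_card_image_eq
      have : (Finset.univ.erase c).image m = τ := by
        ext z
        simp only [Finset.mem_image, Finset.mem_erase, Finset.mem_univ, and_true]
        constructor
        · rintro ⟨i, -, rfl⟩
          exact hm i
        · exact hc z
      rw [this, Finset.card_erase_of_mem (Finset.mem_univ c), Finset.card_univ]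
      omega
    exact hinjOn (by simpa using hi) (by simpa using hj) hij
  have hia := hinj a hsa
  have hib := hinj b hsb
  obtain ⟨x₁, hx₁τ, hx₁, hD₁, hu₁⟩ := exists_unique_extension hr hm hmin hD a (hM' a) hsa
  obtain ⟨x₂, hx₂τ, hx₂, hD₂, hu₂⟩ := exists_unique_extension hr hm hmin hD b (hM' b) hsb
  refine ⟨x₁, x₂, ?_, fun x => ⟨?_, ?_⟩⟩
  · rintro rfl
    obtain ⟨i, hi⟩ := hD x₁
    have hle := hi _ (hm i)
    by_cases h : i = a
    · exact absurd hle (not_le.2 (hx₂ i (by rw [h]; exact hab)))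
    · exact absurd hle (not_le.2 (hx₁ i h))
  · rintro ⟨hxτ, hDx⟩
    -- A member of `τ` stays lowest for some `k` after `x` is added.
    have key : ∀ i, ∃ k, m k = m i ∧ r k (m k) < r k x := fun i => by
      obtain ⟨k, hk⟩ := hDx (m i)
      have hki : m k = m i := hr k (le_antisymm (hmin k _ (hm i))
        (hk _ (Finset.mem_insert_of_mem (hm k))))
      refine ⟨k, hki, lt_of_le_of_ne ?_ fun h => hxτ (hr k h ▸ hm k)⟩
      rw [hki]
      exact hk x (Finset.mem_insert_self _ _)
    have hlow : ∀ i, r i x ≤ r i (m i) → i = a ∨ i = b := by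
      intro i hi
      by_contra! h
      obtain ⟨k, hk, hkx⟩ := key i
      have hki : k ≠ i := by
        rintro rfl
        exact absurd hi (not_le.2 hkx)
      have h1 : k = a := by
        by_contra h'
        exact hki (hia k i h' h.1 hk)
      have h2 : k = b := by
        by_contra h'
        exact hki (hib k i h' h.2 hk)
      exact hab (h1.symm.trans h2)
    by_cases h1 : ∀ i, i ≠ a → r i (m i) < r i x
    · exact Or.inl (hu₁ x h1 hDx)
    by_cases h2 : ∀ i, i ≠ b → r i (m i) < r i x
    · exact Or.inr (hu₂ x h2 hDx)
    exfalso
    push Not at h1 h2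
    obtain ⟨i, hi, hix⟩ := h1
    obtain ⟨j, hj, hjx⟩ := h2
    have hi' : i = b := (hlow i hix).resolve_left hi
    have hj' : j = a := (hlow j hjx).resolve_right hj
    subst hi' hj'
    obtain ⟨k, hk, hkx⟩ := key j
    have hkj : k ≠ j := by
      rintro rfl
      exact absurd hjx (not_le.2 hkx)
    have hki : k = i := hia k i hkj hi (hk.trans hmab)
    subst hki
    exact absurd hix (not_le.2 hkx)
  · rintro (rfl | rfl)
    · exact ⟨hx₁τ, hD₁⟩
    · exact ⟨hx₂τ, hD₂⟩

/-! ### Scarf's lemma -/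

/-- The facets of a full-size set `σ` that carry every colour but `i₀` are even in number, unless
`σ` carries all colours. -/
theorem even_card_facets {P I : Type*} [Fintype P] [DecidableEq P] [Fintype I] [DecidableEq I]
    (i₀ : I) (c : P → I) {σ : Finset P} (hσ : σ.card = Fintype.card I)
    (hc : σ.image c ≠ Finset.univ) :
    Even (Finset.univ.filter fun τ : Finset P =>
      (τ.image c = Finset.univ.erase i₀ ∧ τ.card + 1 = Fintype.card I) ∧ τ ⊆ σ).card := by
  rcases Finset.eq_empty_or_nonempty (Finset.univ.filter fun τ : Finset P =>
      (τ.image c = Finset.univ.erase i₀ ∧ τ.card + 1 = Fintype.card I) ∧ τ ⊆ σ) with h | ⟨τ, hτ⟩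
  · simp [h]
  simp only [Finset.mem_filter, Finset.mem_univ, true_and] at hτ
  obtain ⟨⟨hτc, hτn⟩, hτσ⟩ := hτ
  obtain ⟨x, hx⟩ : ∃ x, σ \ τ = {x} := by
    rw [← Finset.card_eq_one, Finset.card_sdiff_of_subset hτσ]
    omega
  have hxτ : x ∉ τ := by
    have : x ∈ σ \ τ := by simp [hx]
    exact (Finset.mem_sdiff.1 this).2
  have hσe : σ = insert x τ := by
    rw [← Finset.sdiff_union_of_subset hτσ, hx]
    rfl
  subst hσe
  have hinj : Set.InjOn c (τ : Set P) := by
    apply Finset.injOn_of_card_image_eq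
    rw [hτc, Finset.card_erase_of_mem (Finset.mem_univ _), Finset.card_univ]
    omega
  have hcx : c x ≠ i₀ := by
    intro h
    apply hc
    rw [Finset.image_insert, hτc, h, Finset.insert_erase (Finset.mem_univ _)]
  obtain ⟨x', hx', hcx'⟩ : ∃ x' ∈ τ, c x' = c x := by
    have : c x ∈ τ.image c := by simp [hτc, hcx]
    simpa using this
  have hne : x ≠ x' := fun h => hxτ (h ▸ hx')
  have hcardτ' : ((insert x τ).erase x').card = τ.card := by
    rw [Finset.card_erase_of_mem (Finset.mem_insert_of_mem hx'), Finset.card_insert_of_notMem hxτ]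
    rfl
  have : (Finset.univ.filter fun τ' : Finset P =>
      (τ'.image c = Finset.univ.erase i₀ ∧ τ'.card + 1 = Fintype.card I) ∧ τ' ⊆ insert x τ)
      = {τ, (insert x τ).erase x'} := by
    ext τ'
    simp only [Finset.mem_filter, Finset.mem_univ, true_and, Finset.mem_insert,
      Finset.mem_singleton]
    constructor
    · rintro ⟨⟨hc', hn'⟩, hs'⟩
      obtain ⟨z, hz⟩ : ∃ z, insert x τ \ τ' = {z} := by
        rw [← Finset.card_eq_one, Finset.card_sdiff_of_subset hs']
        omega
      have hzm : z ∈ insert x τ \ τ' := by simp [hz]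
      have hτ' : τ' = (insert x τ).erase z := by
        rw [Finset.erase_eq, ← hz, Finset.sdiff_sdiff_eq_self hs']
      rw [Finset.mem_sdiff, Finset.mem_insert] at hzm
      rcases hzm.1 with rfl | hzτ
      · left
        rw [hτ', Finset.erase_insert hxτ]
      · right
        rw [hτ']
        congr 1
        have : c z ∈ τ'.image c := by
          rw [hc', ← hτc]
          exact Finset.mem_image_of_mem c hzτ
        obtain ⟨w, hw, hwz⟩ := Finset.mem_image.1 this
        rw [hτ', Finset.mem_erase, Finset.mem_insert] at hw
        obtain ⟨hwne, rfl | hwτ⟩ := hw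
        · exact hinj hzτ hx' (hwz.symm.trans hcx'.symm)
        · exact absurd (hinj hwτ hzτ hwz) hwne
    · rintro (rfl | rfl)
      · exact ⟨⟨hτc, hτn⟩, Finset.subset_insert _ _⟩
      · refine ⟨⟨?_, by rw [hcardτ']; exact hτn⟩, Finset.erase_subset _ _⟩
        rw [← hτc]
        ext i
        simp only [Finset.mem_image, Finset.mem_erase, Finset.mem_insert]
        constructor
        · rintro ⟨w, ⟨hw, rfl | hwτ⟩, rfl⟩
          · exact ⟨x', hx', hcx'⟩
          · exact ⟨w, hwτ, rfl⟩
        · rintro ⟨w, hw, rfl⟩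
          by_cases h : w = x'
          · exact ⟨x, ⟨hne, Or.inl rfl⟩, by rw [h, hcx']⟩
          · exact ⟨w, ⟨h, Or.inr hw⟩, rfl⟩
  rw [this, Finset.card_pair]
  · exact even_two
  · intro h
    exact hxτ (h ▸ Finset.mem_erase.2 ⟨hne, Finset.mem_insert_self _ _⟩)

/-- **Scarf's lemma.** The points `e i` play the part of the vertices of a large simplex: `e i` is
lowest in the ranking `r i`, and higher than all ordinary points in the other rankings. -/
theorem exists_dominant_rainbow {P I : Type*} [Fintype P] [DecidableEq P] [Fintype I]
    [DecidableEq I] (i₀ : I) {r : I → P → ℕ} (hr : ∀ i, Function.Injective (r i))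
    (c : P → I) (e : I → P) (hce : ∀ i, c (e i) = i) (he₁ : ∀ i y, r i (e i) ≤ r i y)
    (he₂ : ∀ i j y, i ≠ j → y ∉ Set.range e → r i y < r i (e j))
    (p₀ : P) (hp₀ : p₀ ∉ Set.range e) :
    ∃ σ : Finset P, Dominant r σ ∧ σ.card = Fintype.card I ∧ σ.image c = Finset.univ := by
  classical
  by_contra! hno
  have heinj : Function.Injective e := fun i j h => by rw [← hce i, h, hce]
  have hcardI : (Finset.univ.erase i₀).card + 1 = Fintype.card I := by
    rw [Finset.card_erase_add_one (Finset.mem_univ _), Finset.card_univ]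
  set R : Finset (Finset P) := Finset.univ.filter fun σ => σ.card = Fintype.card I ∧ Dominant r σ
    with hR
  set D : Finset (Finset P) := Finset.univ.filter fun τ =>
    τ.image c = Finset.univ.erase i₀ ∧ τ.card + 1 = Fintype.card I with hDdef
  set τ₀ : Finset P := (Finset.univ.erase i₀).image e with hτ₀
  have hτ₀card : τ₀.card + 1 = Fintype.card I := by
    rw [hτ₀, Finset.card_image_of_injective _ heinj, hcardI]
  have hτ₀D : τ₀ ∈ D := by
    simp only [hDdef, Finset.mem_filter, Finset.mem_univ, true_and]
    refine ⟨?_, hτ₀card⟩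
    rw [hτ₀, Finset.image_image, show c ∘ e = id from funext hce, Finset.image_id]
  have hcount := Finset.sum_card_bipartiteAbove_eq_sum_card_bipartiteBelow
    (s := D) (t := R) (fun τ σ => τ ⊆ σ)
  have heven : Even (∑ σ ∈ R, (D.bipartiteBelow (fun τ σ => τ ⊆ σ) σ).card) := by
    refine Finset.even_sum _ fun σ hσ => ?_
    simp only [hR, Finset.mem_filter, Finset.mem_univ, true_and] at hσ
    have := even_card_facets i₀ c hσ.1 (hno σ hσ.2 hσ.1)
    rwa [Finset.bipartiteBelow, hDdef, Finset.filter_filter]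
  have hext : ∀ τ ∈ D, (R.bipartiteAbove (fun τ σ => τ ⊆ σ) τ).card =
      (Finset.univ.filter fun x => x ∉ τ ∧ Dominant r (insert x τ)).card := by
    intro τ hτ
    simp only [hDdef, Finset.mem_filter, Finset.mem_univ, true_and] at hτ
    symm
    refine Finset.card_bij (fun x _ => insert x τ) ?_ ?_ ?_
    · intro x hx
      simp only [Finset.mem_filter, Finset.mem_univ, true_and] at hx
      simp only [Finset.bipartiteAbove, hR, Finset.mem_filter, Finset.mem_univ, true_and]
      exact ⟨⟨by rw [Finset.card_insert_of_notMem hx.1, hτ.2], hx.2⟩, Finset.subset_insert _ _⟩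
    · intro x hx y hy hxy
      simp only [Finset.mem_filter, Finset.mem_univ, true_and] at hx hy
      have : x ∈ insert y τ := hxy ▸ Finset.mem_insert_self x τ
      exact (Finset.mem_insert.1 this).resolve_right hx.1
    · intro σ hσ
      simp only [Finset.bipartiteAbove, hR, Finset.mem_filter, Finset.mem_univ, true_and] at hσ
      obtain ⟨x, hx⟩ : ∃ x, σ \ τ = {x} := by
        rw [← Finset.card_eq_one, Finset.card_sdiff_of_subset hσ.2]
        omega
      have hxm : x ∈ σ \ τ := by simp [hx]
      have hσe : insert x τ = σ := by
        rw [← Finset.sdiff_union_of_subset hσ.2, hx]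
        rfl
      refine ⟨x, ?_, hσe⟩
      simp only [Finset.mem_filter, Finset.mem_univ, true_and]
      exact ⟨(Finset.mem_sdiff.1 hxm).2, hσe ▸ hσ.1.2⟩
  -- The outer facet `τ₀` has a unique dominant extension.
  have houter : (R.bipartiteAbove (fun τ σ => τ ⊆ σ) τ₀).card = 1 := by
    rw [hext τ₀ hτ₀D, Finset.card_eq_one]
    obtain ⟨x, hx, hmax⟩ := (Finset.univ.filter
      fun y => y ∉ Set.range e).exists_max_image (r i₀) ⟨p₀, by simpa using hp₀⟩
    simp only [Finset.mem_filter, Finset.mem_univ, true_and] at hx hmax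
    refine ⟨x, ?_⟩
    ext y
    simp only [Finset.mem_filter, Finset.mem_univ, true_and, Finset.mem_singleton]
    constructor
    · rintro ⟨hy, hDy⟩
      have hyr : y ∉ Set.range e := by
        rintro ⟨j, rfl⟩
        have hj : j = i₀ := by
          by_contra hj
          exact hy (Finset.mem_image_of_mem e (by simpa using hj))
        subst hj
        obtain ⟨i, hi⟩ := hDy p₀
        have hmem : e i ∈ insert (e j) τ₀ := by
          by_cases h : i = j
          · simp [h]
          · exact Finset.mem_insert_of_mem (Finset.mem_image_of_mem e (by simpa using h))
        exact hp₀ ⟨i, hr i (le_antisymm (he₁ i _) (hi _ hmem))⟩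
      obtain ⟨i, hi⟩ := hDy x
      have hii : i = i₀ := by
        by_contra h
        have hmem : e i ∈ insert y τ₀ :=
          Finset.mem_insert_of_mem (Finset.mem_image_of_mem e (by simpa using h))
        exact hx ⟨i, hr i (le_antisymm (he₁ i _) (hi _ hmem))⟩
      subst hii
      exact hr i (le_antisymm (hmax y hyr) (hi y (Finset.mem_insert_self _ _)))
    · rintro rfl
      refine ⟨fun h => ?_, fun z => ?_⟩
      · obtain ⟨i, -, hi⟩ := Finset.mem_image.1 h
        exact hx ⟨i, hi⟩
      · by_cases hz : z ∈ Set.range e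
        · obtain ⟨j, rfl⟩ := hz
          exact ⟨j, fun w _ => he₁ j w⟩
        · refine ⟨i₀, fun w hw => ?_⟩
          rcases Finset.mem_insert.1 hw with rfl | hw
          · exact hmax z hz
          · obtain ⟨j, hj, rfl⟩ := Finset.mem_image.1 hw
            exact (he₂ i₀ j z (Finset.ne_of_mem_erase hj).symm hz).le
  have hinner : ∀ τ ∈ D.erase τ₀, Even (R.bipartiteAbove (fun τ σ => τ ⊆ σ) τ).card := by
    intro τ hτ
    obtain ⟨hne, hτD⟩ := Finset.mem_erase.1 hτ
    rw [hext τ hτD]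
    simp only [hDdef, Finset.mem_filter, Finset.mem_univ, true_and] at hτD
    obtain ⟨hτc, hτn⟩ := hτD
    rcases Finset.eq_empty_or_nonempty
      (Finset.univ.filter fun x => x ∉ τ ∧ Dominant r (insert x τ)) with h | ⟨x, hx⟩
    · simp [h]
    simp only [Finset.mem_filter, Finset.mem_univ, true_and] at hx
    have hDτ : Dominant r τ := hx.2.mono (Finset.subset_insert _ _)
    have hτne : τ.Nonempty := by
      rw [Finset.nonempty_iff_ne_empty]
      rintro rfl
      apply hne
      rw [hτ₀, ← hτc]
      simp
    have hM : ∀ a, ∃ y, ∀ i, i ≠ a → ∃ z ∈ τ, r i z < r i y := by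
      intro a
      refine ⟨e a, fun i hia => ?_⟩
      by_contra! hcon
      have hall : ∀ z ∈ τ, ∃ j, j ≠ i ∧ e j = z := by
        intro z hz
        have hzr : z ∈ Set.range e := by
          by_contra h
          exact absurd (hcon z hz) (not_le.2 (he₂ i a z hia h))
        obtain ⟨j, rfl⟩ := hzr
        refine ⟨j, ?_, rfl⟩
        rintro rfl
        exact hia (heinj (hr j (le_antisymm (he₁ j _) (hcon _ hz))))
      have hii : i = i₀ := by
        by_contra h
        have : i ∈ τ.image c := by simp [hτc, h]
        obtain ⟨z, hz, hcz⟩ := Finset.mem_image.1 this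
        obtain ⟨j, hj, rfl⟩ := hall z hz
        exact hj (by rw [← hcz, hce])
      subst hii
      apply hne
      apply Finset.eq_of_subset_of_card_le
      · intro z hz
        obtain ⟨j, hj, rfl⟩ := hall z hz
        exact Finset.mem_image_of_mem e (by simpa using hj)
      · omega
    obtain ⟨x₁, x₂, hne₁₂, hx₁₂⟩ := exists_two_extensions hr hτne hτn hDτ hM
    have : (Finset.univ.filter fun x => x ∉ τ ∧ Dominant r (insert x τ)) = {x₁, x₂} := by
      ext x
      simp [hx₁₂ x]
    rw [this, Finset.card_pair hne₁₂]
    exact even_two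
  rw [← hcount, ← Finset.add_sum_erase _ _ hτ₀D, houter] at heven
  have := Finset.even_sum _ hinner
  rw [Nat.even_add] at heven
  exact absurd (heven.2 this) (by decide)

/-! ### Brouwer's theorem for the standard simplex -/

/-- The combinatorial core of Brouwer's theorem: if every grid point of the simplex
`{x : I → ℕ | ∑ x = N}` has a colour in `I`, some set `C` of colours is realised by grid points
`x i` (`i ∈ C`) that are within `card I` of each other and of the face `x k = 0` (`k ∉ C`). -/
theorem exists_small_rainbow {I : Type*} [Fintype I] [DecidableEq I] [Nonempty I] (N : ℕ)
    (color : (I → ℕ) → I) :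
    ∃ (C : Finset I) (x : I → I → ℕ) (m : I → ℕ), C.Nonempty ∧
      (∀ i ∈ C, ∑ k, x i k = N ∧ color (x i) = i ∧
        ∀ k, m k ≤ x i k ∧ x i k ≤ m k + Fintype.card I) ∧
      ∀ k, k ∉ C → m k = 0 := by
  classical
  obtain ⟨i₀⟩ := ‹Nonempty I›
  let T := {x : I → Fin (N + 1) // ∑ i, (x i : ℕ) = N}
  have mkT : ∀ y : I → ℕ, ∑ i, y i = N → ∃ t : T, ∀ i, (t.1 i : ℕ) = y i := by
    intro y hy
    have hle : ∀ i, y i < N + 1 := fun i => Nat.lt_succ_of_le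
      (hy ▸ Finset.single_le_sum (f := y) (fun _ _ => Nat.zero_le _) (Finset.mem_univ i))
    exact ⟨⟨fun i => ⟨y i, hle i⟩, hy⟩, fun i => rfl⟩
  obtain ⟨t₀, -⟩ := mkT (fun i => if i = i₀ then N else 0) (by simp)
  let P := T ⊕ I
  let tie : P ≃ Fin (Fintype.card P) := Fintype.equivFin P
  let h : I → P → ℕ := fun i => Sum.elim (fun t => (t.1 i : ℕ) + 1)
    (fun j => if j = i then 0 else N + 2)
  -- Rank by height, breaking ties by an arbitrary enumeration of the points.
  let r : I → P → ℕ := fun i p => Fintype.card P * h i p + tie p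
  have hlt : ∀ i p q, h i p < h i q → r i p < r i q := by
    intro i p q hpq
    have h1 := (tie p).2
    have h2 : Fintype.card P * (h i p + 1) ≤ Fintype.card P * h i q := Nat.mul_le_mul_left _ hpq
    simp only [r]
    rw [mul_add, mul_one] at h2
    omega
  have hle : ∀ i p q, r i p ≤ r i q → h i p ≤ h i q := by
    intro i p q hpq
    by_contra! hcon
    exact absurd (hlt i q p hcon) (not_lt.2 hpq)
  have hr : ∀ i, Function.Injective (r i) := by
    intro i p q hpq
    have h1 : h i p = h i q := le_antisymm (hle i p q hpq.le) (hle i q p hpq.ge)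
    have h2 : (tie p : ℕ) = tie q := by
      simp only [r, h1] at hpq
      omega
    exact tie.injective (Fin.ext h2)
  let c : P → I := Sum.elim (fun t => color fun i => (t.1 i : ℕ)) id
  obtain ⟨σ, hD, hcard, hc⟩ := exists_dominant_rainbow (P := P) i₀ hr c Sum.inr (fun i => rfl)
    (by
      intro i y
      by_cases hy : y = Sum.inr i
      · rw [hy]
      · refine (hlt i _ _ ?_).le
        rcases y with t | j
        · simp [h]
        · have : j ≠ i := fun hj => hy (by rw [hj])
          simp [h, this])
    (by
      intro i j y hij hy
      apply hlt
      rcases y with t | k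
      · have := (t.1 i).2
        simp only [h, Sum.elim_inl, Sum.elim_inr, hij.symm, if_false]
        omega
      · exact absurd ⟨k, rfl⟩ hy)
    (Sum.inl t₀) (by simp)
  set C : Finset I := Finset.univ.filter fun i => (Sum.inr i : P) ∉ σ with hC
  have hmemC : ∀ i, i ∈ C ↔ (Sum.inr i : P) ∉ σ := by simp [hC]
  have hcol : ∀ i ∈ C, ∃ t : T, (Sum.inl t : P) ∈ σ ∧ (color fun k => (t.1 k : ℕ)) = i := by
    intro i hi
    have : i ∈ σ.image c := by simp [hc]
    obtain ⟨p, hp, hpc⟩ := Finset.mem_image.1 this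
    rcases p with t | j
    · exact ⟨t, hp, hpc⟩
    · have hji : j = i := hpc
      subst hji
      exact absurd hp ((hmemC _).1 hi)
  have hm : ∀ k, ∃ m : ℕ, (k ∉ C → m = 0) ∧ (∀ t : T, (Sum.inl t : P) ∈ σ → m ≤ t.1 k) ∧
      (k ∈ C → ∃ t : T, (Sum.inl t : P) ∈ σ ∧ (t.1 k : ℕ) = m) := by
    intro k
    by_cases hk : k ∈ C
    · obtain ⟨t, ht, -⟩ := hcol k hk
      obtain ⟨s, hs, hmin⟩ := (Finset.univ.filter
        fun t : T => (Sum.inl t : P) ∈ σ).exists_min_image (fun t => (t.1 k : ℕ))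
          ⟨t, by simpa using ht⟩
      simp only [Finset.mem_filter, Finset.mem_univ, true_and] at hs hmin
      exact ⟨s.1 k, fun h => absurd hk h, hmin, fun _ => ⟨s, hs, rfl⟩⟩
    · exact ⟨0, fun _ => rfl, fun _ _ => Nat.zero_le _, fun h => absurd h hk⟩
  choose m hm₀ hmle hmeq using hm
  have hdom : ∀ y : T, ∃ i ∈ C, (y.1 i : ℕ) ≤ m i := by
    intro y
    obtain ⟨i, hi⟩ := hD (Sum.inl y)
    have hiC : i ∈ C := by
      rw [hmemC]
      intro hmem
      have := hle i _ _ (hi _ hmem)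
      simp [h] at this
    obtain ⟨t, ht, htm⟩ := hmeq i hiC
    have := hle i _ _ (hi _ ht)
    simp only [h, Sum.elim_inl] at this
    exact ⟨i, hiC, by omega⟩
  have hsum : N < ∑ i ∈ C, (m i + 1) := by
    by_contra! hcon
    obtain ⟨y, hy⟩ := mkT (fun i => (if i ∈ C then m i + 1 else 0) +
      if i = i₀ then N - ∑ i ∈ C, (m i + 1) else 0) (by
        rw [Finset.sum_add_distrib, Finset.sum_ite_mem, Finset.univ_inter]
        simp only [Finset.sum_ite_eq', Finset.mem_univ, if_true]
        omega)
    obtain ⟨i, hiC, hi⟩ := hdom y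
    rw [hy i, if_pos hiC] at hi
    omega
  have hCm : ∑ i ∈ C, m i = ∑ i, m i :=
    Finset.sum_subset (Finset.subset_univ _) fun i _ hi => hm₀ i hi
  rw [Finset.sum_add_distrib, hCm, Finset.sum_const, smul_eq_mul, mul_one] at hsum
  have hCcard : C.card ≤ Fintype.card I := Finset.card_le_univ C
  have hup : ∀ t : T, (Sum.inl t : P) ∈ σ → ∀ k, (t.1 k : ℕ) ≤ m k + Fintype.card I := by
    intro t ht k
    have h1 := Finset.add_sum_erase Finset.univ (fun i => (t.1 i : ℕ)) (Finset.mem_univ k)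
    have h2 := Finset.add_sum_erase Finset.univ m (Finset.mem_univ k)
    have h3 : ∑ i ∈ Finset.univ.erase k, m i ≤ ∑ i ∈ Finset.univ.erase k, (t.1 i : ℕ) :=
      Finset.sum_le_sum fun i _ => hmle i t ht
    have h4 := t.2
    omega
  have hx : ∀ i, ∃ x : I → ℕ, i ∈ C → ∑ k, x k = N ∧ color x = i ∧
      ∀ k, m k ≤ x k ∧ x k ≤ m k + Fintype.card I := by
    intro i
    by_cases hi : i ∈ C
    · obtain ⟨t, ht, htc⟩ := hcol i hi
      exact ⟨fun k => t.1 k, fun _ => ⟨t.2, htc, fun k => ⟨hmle k t ht, hup t ht k⟩⟩⟩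
    · exact ⟨0, fun h => absurd h hi⟩
  choose x hx using hx
  obtain ⟨i, hi, -⟩ := hdom t₀
  exact ⟨C, x, m, ⟨i, hi⟩, hx, hm₀⟩

/-- Colour a grid point `x` of mesh `1 / N` by some `i` with `x i ≤ f x i`. The points of a small
rainbow set carry this inequality over to a common nearby `t` for the colours in `C`; for the other
coordinates `t i` is itself small. -/
theorem exists_approx_fixedPoint_stdSimplex {I : Type*} [Fintype I] [Nonempty I]
    {f : (I → ℝ) → I → ℝ} (hf : ContinuousOn f (stdSimplex ℝ I))
    (hmaps : Set.MapsTo f (stdSimplex ℝ I) (stdSimplex ℝ I)) {ε : ℝ} (hε : 0 < ε) :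
    ∃ t ∈ stdSimplex ℝ I, ∀ i, t i - ε ≤ f t i := by
  classical
  have huc := (isCompact_stdSimplex ℝ I).uniformContinuousOn_of_continuous hf
  rw [Metric.uniformContinuousOn_iff] at huc
  obtain ⟨δ, hδ, huc⟩ := huc (ε / 2) (by positivity)
  set n : ℝ := ((Fintype.card I : ℕ) : ℝ) with hn
  have hn0 : 0 ≤ n := by positivity
  obtain ⟨N, hN⟩ := exists_nat_gt (n / min δ (ε / 2))
  have hmin : 0 < min δ (ε / 2) := by positivity
  have hN0 : (0 : ℝ) < N := lt_of_le_of_lt (by positivity) hN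
  have hnN : n / N < min δ (ε / 2) := by
    rw [div_lt_iff₀ hmin] at hN
    rw [div_lt_iff₀ hN0]
    linarith
  have hnδ : n / N < δ := hnN.trans_le (min_le_left _ _)
  have hnε : n / N < ε / 2 := hnN.trans_le (min_le_right _ _)
  let s : (I → ℕ) → I → ℝ := fun x i => x i / N
  have hs : ∀ x : I → ℕ, ∑ i, x i = N → s x ∈ stdSimplex ℝ I := by
    intro x hx
    refine ⟨fun i => by positivity, ?_⟩
    simp only [s]
    rw [← Finset.sum_div, ← Nat.cast_sum, hx, div_self hN0.ne']
  have hcol : ∀ x : I → ℕ, ∃ i, ∑ i, x i = N → s x i ≤ f (s x) i := by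
    intro x
    by_cases hx : ∑ i, x i = N
    · obtain ⟨i, -, hi⟩ := Finset.exists_le_of_sum_le (s := Finset.univ) (f := s x)
        (g := f (s x)) Finset.univ_nonempty
        (by rw [(hs x hx).2, (hmaps (hs x hx)).2])
      exact ⟨i, fun _ => hi⟩
    · exact ⟨Classical.arbitrary I, fun h => absurd h hx⟩
  choose color hcolor using hcol
  obtain ⟨C, x, m, ⟨i₀, hi₀⟩, hx, hm⟩ := exists_small_rainbow N color
  have hclose : ∀ i ∈ C, ∀ j ∈ C, ∀ k, s (x i) k ≤ s (x j) k + n / N := by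
    intro i hi j hj k
    simp only [s]
    rw [← add_div]
    gcongr
    have h1 := ((hx i hi).2.2 k).2
    have h2 := ((hx j hj).2.2 k).1
    rw [hn]
    exact_mod_cast (by omega : x i k ≤ x j k + Fintype.card I)
  have ht := hs _ (hx i₀ hi₀).1
  refine ⟨s (x i₀), ht, fun i => ?_⟩
  by_cases hi : i ∈ C
  · have hti := hs _ (hx i hi).1
    have hd : dist (s (x i)) (s (x i₀)) < δ := by
      refine lt_of_le_of_lt ((dist_pi_le_iff (by positivity)).2 fun k => ?_) hnδ
      rw [Real.dist_eq, abs_le]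
      have h1 := hclose i hi i₀ hi₀ k
      have h2 := hclose i₀ hi₀ i hi k
      constructor <;> linarith
    have h1 := (dist_le_pi_dist _ _ i).trans_lt (huc _ hti _ ht hd)
    rw [Real.dist_eq, abs_lt] at h1
    have h2 := hcolor (x i) (hx i hi).1
    rw [(hx i hi).2.1] at h2
    have h3 := hclose i₀ hi₀ i hi i
    linarith [h1.2]
  · have h1 := (hmaps ht).1 i
    have h2 : s (x i₀) i ≤ n / N := by
      have := ((hx i₀ hi₀).2.2 i).2
      rw [hm i hi, zero_add] at this
      simp only [s]
      gcongr
      rw [hn]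
      exact_mod_cast this
    linarith

/-- **Brouwer's fixed point theorem** for the standard simplex. -/
theorem exists_fixedPoint_stdSimplex {I : Type*} [Fintype I] [Nonempty I]
    {f : (I → ℝ) → I → ℝ} (hf : ContinuousOn f (stdSimplex ℝ I))
    (hmaps : Set.MapsTo f (stdSimplex ℝ I) (stdSimplex ℝ I)) :
    ∃ t ∈ stdSimplex ℝ I, f t = t := by
  classical
  have hne : (stdSimplex ℝ I).Nonempty := ⟨_, single_mem_stdSimplex ℝ (Classical.arbitrary I)⟩
  -- The total deficit `∑ (t i - f t i)⁺` vanishes only at a fixed point, as both sums are `1`.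
  obtain ⟨t, ht, hmin⟩ := (isCompact_stdSimplex ℝ I).exists_isMinOn hne
    (f := fun t => ∑ i, max (t i - f t i) 0) (by
      refine continuousOn_finsetSum _ fun i _ => ?_
      have h1 : ContinuousOn (fun t => f t i) (stdSimplex ℝ I) := continuousOn_pi.1 hf i
      have h2 : ContinuousOn (fun t : I → ℝ => t i) (stdSimplex ℝ I) :=
        (continuous_apply i).continuousOn
      exact (h2.sub h1).sup continuousOn_const)
  have hzero : ∑ i, max (t i - f t i) 0 ≤ 0 := by
    refine le_of_forall_pos_le_add fun ε hε => ?_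
    have hn : (0 : ℝ) < Fintype.card I := by exact_mod_cast Fintype.card_pos
    obtain ⟨u, hu, hfu⟩ := exists_approx_fixedPoint_stdSimplex hf hmaps (div_pos hε hn)
    refine (hmin hu).trans ?_
    calc ∑ i, max (u i - f u i) 0 ≤ ∑ _i : I, ε / Fintype.card I :=
          Finset.sum_le_sum fun i _ => max_le (by linarith [hfu i]) (by positivity)
      _ = 0 + ε := by
          rw [Finset.sum_const, Finset.card_univ, nsmul_eq_mul, mul_div_cancel₀ _ hn.ne', zero_add]
  have hle : ∀ i, t i ≤ f t i := by
    intro i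
    have h1 := Finset.single_le_sum (f := fun i => max (t i - f t i) 0)
      (fun i _ => le_max_right _ _) (Finset.mem_univ i)
    have h2 := le_max_left (t i - f t i) 0
    linarith
  have heq := (Finset.sum_eq_sum_iff_of_le (s := Finset.univ) fun i _ => hle i).1
    (by rw [ht.2, (hmaps ht).2])
  exact ⟨t, ht, funext fun i => (heq i (Finset.mem_univ i)).symm⟩

/-! ### Schauder's theorem -/

/-- Approximate `φ` by its composite with the Schauder projection onto the convex hull of a finite
`ε`-net of the compact set, and apply Brouwer's theorem to the barycentric coordinates. -/
theorem exists_approx_fixedPoint {X : Type*} [NormedAddCommGroup X] [NormedSpace ℝ X]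
    {C : Set X} (hC_closed : IsClosed C) (hC_convex : Convex ℝ C) (hC_ne : C.Nonempty)
    {φ : X → X} (hφ_maps : φ '' C ⊆ C) (hφ_cont : ContinuousOn φ C)
    (hφ_comp : IsCompact (closure (φ '' C))) {ε : ℝ} (hε : 0 < ε) :
    ∃ x ∈ C, dist x (φ x) ≤ ε := by
  classical
  have hKC : closure (φ '' C) ⊆ C := closure_minimal hφ_maps hC_closed
  obtain ⟨s, hsK, hsfin, hcov⟩ := hφ_comp.finite_cover_balls hε
  have hnet : ∀ y ∈ φ '' C, ∃ p ∈ s, dist y p < ε := by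
    intro y hy
    simpa using hcov (subset_closure hy)
  have : Fintype s := hsfin.fintype
  obtain ⟨x₀, hx₀⟩ := hC_ne
  obtain ⟨p₀, hp₀, -⟩ := hnet _ (Set.mem_image_of_mem φ hx₀)
  have : Nonempty s := ⟨⟨p₀, hp₀⟩⟩
  let b : (s → ℝ) → X := fun t => ∑ i, t i • (i : X)
  have hb : Continuous b := by fun_prop
  have hbC : ∀ t ∈ stdSimplex ℝ s, b t ∈ C := fun t ht =>
    hC_convex.sum_mem (fun i _ => ht.1 i) ht.2 fun i _ => hKC (hsK i.2)
  let w : s → X → ℝ := fun i y => max (ε - dist y i) 0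
  have hw : ∀ i, Continuous (w i) := fun i => by fun_prop
  have hw0 : ∀ i y, 0 ≤ w i y := fun i y => le_max_right _ _
  have hW : ∀ y ∈ φ '' C, 0 < ∑ i, w i y := by
    intro y hy
    obtain ⟨p, hp, hyp⟩ := hnet y hy
    exact Finset.sum_pos' (fun i _ => hw0 i y) ⟨⟨p, hp⟩, Finset.mem_univ _,
      lt_max_of_lt_left (by simpa using hyp)⟩
  have hφb : ContinuousOn (fun t => φ (b t)) (stdSimplex ℝ s) :=
    hφ_cont.comp hb.continuousOn hbC
  obtain ⟨t, ht, hft⟩ := exists_fixedPoint_stdSimplex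
    (f := fun t i => w i (φ (b t)) / ∑ j, w j (φ (b t)))
    (by
      refine continuousOn_pi.2 fun i => ContinuousOn.div ((hw i).comp_continuousOn hφb)
        (continuousOn_finsetSum _ fun j _ => (hw j).comp_continuousOn hφb) fun t ht => ?_
      exact (hW _ (Set.mem_image_of_mem φ (hbC t ht))).ne')
    (by
      intro t ht
      have hpos := hW _ (Set.mem_image_of_mem φ (hbC t ht))
      refine ⟨fun i => div_nonneg (hw0 _ _) hpos.le, ?_⟩
      rw [← Finset.sum_div, div_self hpos.ne'])
  refine ⟨b t, hbC t ht, ?_⟩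
  have hsub : b t - φ (b t) = ∑ i, t i • ((i : X) - φ (b t)) := by
    simp only [smul_sub, Finset.sum_sub_distrib, ← Finset.sum_smul, ht.2, one_smul, b]
  rw [dist_eq_norm, hsub]
  calc ‖∑ i, t i • ((i : X) - φ (b t))‖ ≤ ∑ i, t i * ε := by
        refine norm_sum_le_of_le _ fun i _ => ?_
        rw [norm_smul, Real.norm_of_nonneg (ht.1 i)]
        by_cases hi : dist (φ (b t)) i ≤ ε
        · rw [dist_comm, dist_eq_norm] at hi
          exact mul_le_mul_of_nonneg_left hi (ht.1 i)
        · -- The weight of a net point at distance more than `ε` is zero.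
          have hwi : w i (φ (b t)) = 0 := max_eq_right (by linarith)
          have hti : t i = 0 := by
            rw [← congrFun hft i]
            simp [hwi]
          simp [hti]
    _ = ε := by rw [← Finset.sum_mul, ht.2, one_mul]

/-- **Schauder fixed point theorem.** -/
theorem schauder_fixed_point
    {X : Type*} [NormedAddCommGroup X] [NormedSpace ℝ X]
    (C : Set X) (hC_closed : IsClosed C) (hC_convex : Convex ℝ C)
    (hC_ne : C.Nonempty)
    (φ : X → X) (hφ_maps : φ '' C ⊆ C)
    (hφ_cont : ContinuousOn φ C) (hφ_comp : IsCompact (closure (φ '' C))) :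
    ∃ x ∈ C, φ x = x := by
  have happ : ∀ n : ℕ, ∃ x ∈ C, dist x (φ x) ≤ 1 / ((n : ℝ) + 1) := fun n =>
    exists_approx_fixedPoint hC_closed hC_convex hC_ne hφ_maps hφ_cont hφ_comp (by positivity)
  choose x hxC hx using happ
  obtain ⟨y, hy, g, hg, hlim⟩ := hφ_comp.tendsto_subseq
    (fun n => subset_closure (Set.mem_image_of_mem φ (hxC n)))
  have hyC : y ∈ C := closure_minimal hφ_maps hC_closed hy
  have hd : Filter.Tendsto (fun n => dist ((φ ∘ x) (g n)) (x (g n))) Filter.atTop (nhds 0) := by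
    refine squeeze_zero (fun _ => dist_nonneg) (fun n => ?_)
      (tendsto_one_div_add_atTop_nhds_zero_nat.comp hg.tendsto_atTop)
    rw [dist_comm]
    exact hx (g n)
  have hxlim : Filter.Tendsto (fun n => x (g n)) Filter.atTop (nhds y) :=
    (tendsto_iff_of_dist hd).1 hlim
  have hφlim : Filter.Tendsto (fun n => φ (x (g n))) Filter.atTop (nhds (φ y)) :=
    (hφ_cont y hyC).tendsto.comp
      (tendsto_nhdsWithin_iff.2 ⟨hxlim, Filter.Eventually.of_forall fun n => hxC (g n)⟩)
  exact ⟨y, hyC, tendsto_nhds_unique hφlim hlim⟩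
end

section
/- Let Z be an absolute retract. Then any compact map φ : Z → Z has a fixed point in Z, i.e. there exists x ∈ Z with φ(x) = x. -/
open Set Filter Topology MeasureTheory Metric

section
variable {E : Type*} [NormedAddCommGroup E] [InnerProductSpace ℝ E]

/-- The polynomial `t ↦ det (1 + t A)` has degree at most `dim E`, so its value at `1` is given by
Lagrange interpolation at any `dim E + 1` distinct nodes. The weights do not depend on `A`, which
allows integration in `A` without discussing the coefficients of the polynomial. -/
theorem det_id_add_eq_sum [FiniteDimensional ℝ E] (v : ℕ → ℝ) (hv : Function.Injective v)
    (A : E →L[ℝ] E) :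
    (ContinuousLinearMap.id ℝ E + A).det =
      ∑ i ∈ Finset.range (Module.finrank ℝ E + 1),
        (ContinuousLinearMap.id ℝ E + v i • A).det *
          (Lagrange.basis (Finset.range (Module.finrank ℝ E + 1)) v i).eval 1 := by
  set s := Finset.range (Module.finrank ℝ E + 1)
  let b := Module.finBasis ℝ E
  let M := LinearMap.toMatrix b b (A : E →ₗ[ℝ] E)
  let p : Polynomial ℝ := Matrix.det ((Polynomial.X : Polynomial ℝ) • M.map Polynomial.C
    + (1 : Matrix _ _ ℝ).map Polynomial.C)
  have hp : ∀ t : ℝ, p.eval t = (ContinuousLinearMap.id ℝ E + t • A).det := by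
    intro t
    rw [ContinuousLinearMap.det, ← LinearMap.det_toMatrix b, ← Polynomial.coe_evalRingHom,
      RingHom.map_det]
    congr 1
    ext i j
    simp [M, LinearMap.toMatrix_apply, Matrix.one_apply, Finsupp.single_apply, add_comm, apply_ite,
      eq_comm]
    exact mul_comm _ _
  have hdeg : p.degree < s.card := by
    refine Polynomial.degree_le_natDegree.trans_lt ?_
    have := Polynomial.natDegree_det_X_add_C_le M (1 : Matrix _ _ ℝ)
    rw [Fintype.card_fin] at this
    simp only [s, Finset.card_range]
    exact_mod_cast Nat.lt_succ_of_le this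
  have h1 := congrArg (Polynomial.eval 1) (Lagrange.eq_interpolate hv.injOn hdeg)
  rw [hp, one_smul] at h1
  rw [h1, Lagrange.interpolate_apply, Polynomial.eval_finsetSum]
  simp [hp]

/-- A Lipschitz map on a ball that vanishes on the bounding sphere remains Lipschitz, with the same
constant, when extended by zero. -/
theorem exists_lipschitz_extend_zero {g : E → E} {R C : ℝ} (hC : 0 ≤ C)
    (hlip : ∀ x ∈ closedBall (0 : E) R, ∀ y ∈ closedBall (0 : E) R, ‖g y - g x‖ ≤ C * ‖y - x‖)
    (hz : ∀ x, ‖x‖ = R → g x = 0) :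
    ∃ h : E → E, (∀ x, ‖x‖ ≤ R → h x = g x) ∧ (∀ x, R ≤ ‖x‖ → h x = 0) ∧
      ∀ x y, ‖h y - h x‖ ≤ C * ‖y - x‖ := by
  classical
  let h : E → E := fun x => if ‖x‖ ≤ R then g x else 0
  have hin : ∀ x, ‖x‖ ≤ R → h x = g x := fun x hx => if_pos hx
  have hout : ∀ x, R ≤ ‖x‖ → h x = 0 := fun x hx => by
    rcases hx.eq_or_lt with e | e
    · rw [hin x e.ge, hz x e.symm]
    · exact if_neg e.not_ge
  -- A segment leaving the ball crosses the sphere, where `g` vanishes.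
  have key : ∀ x y, ‖x‖ ≤ R → R ≤ ‖y‖ → ‖h y - h x‖ ≤ C * ‖y - x‖ := by
    intro x y hx hy
    obtain ⟨s, ⟨hs0, hs1⟩, hs⟩ : R ∈ (fun s : ℝ => ‖x + s • (y - x)‖) '' Icc 0 1 := by
      refine intermediate_value_Icc zero_le_one (by fun_prop) ⟨by simpa using hx, by simpa using hy⟩
    have h1 := hlip (x + s • (y - x)) (by simpa using hs.le) x (by simpa using hx)
    rw [hz _ hs, hin x hx, hout y hy] at *
    rw [norm_sub_rev]
    rw [norm_sub_rev x, add_sub_cancel_left, norm_smul, Real.norm_of_nonneg hs0] at h1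
    rw [norm_sub_rev]
    rw [sub_zero] at h1
    rw [zero_sub, norm_neg]
    exact h1.trans (mul_le_mul_of_nonneg_left (mul_le_of_le_one_left (norm_nonneg _) hs1) hC)
  refine ⟨h, hin, hout, fun x y => ?_⟩
  rcases le_total ‖x‖ R with hx | hx <;> rcases le_total ‖y‖ R with hy | hy
  · rw [hin x hx, hin y hy]
    exact hlip x (by simpa using hx) y (by simpa using hy)
  · exact key x y hx hy
  · rw [norm_sub_rev, norm_sub_rev y]; exact key y x hy hx
  · rw [hout x hx, hout y hy]; simpa using mul_nonneg hC (norm_nonneg (y - x))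

variable [FiniteDimensional ℝ E] [MeasurableSpace E] [BorelSpace E]

/-- No-retraction theorem for maps that are `C¹` on the whole space. -/
theorem no_smooth_retraction {R : ℝ} (hR : 0 < R) {r : E → E} (hr : ContDiff ℝ 1 r)
    (hnorm : ∀ x, ‖r x‖ = R) (hfix : ∀ x, ‖x‖ = R → r x = x) : False := by
  set B := closedBall (0 : E) R
  have hBc : IsCompact B := isCompact_closedBall _ _
  have hBconv : Convex ℝ B := convex_closedBall _ _
  let g : E → E := fun x => r x - x
  have hg : ContDiff ℝ 1 g := hr.sub contDiff_id
  have hgd : Differentiable ℝ g := hg.differentiable one_ne_zero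
  have hg' : Continuous (fderiv ℝ g) := hg.continuous_fderiv one_ne_zero
  obtain ⟨C, hC⟩ := hBc.exists_bound_of_continuousOn hg'.continuousOn
  have hC0 : 0 ≤ C := (norm_nonneg _).trans (hC 0 (by simp [B, hR.le]))
  obtain ⟨h, hin, hout, hlip⟩ := exists_lipschitz_extend_zero hC0
    (fun x hx y hy => hBconv.norm_image_sub_le_of_norm_fderiv_le
      (fun x _ => hgd x) hC hx hy) (fun x hx => by simp [g, hfix x hx])
  have hdetc : Continuous fun A : E →L[ℝ] E => A.det := ContinuousLinearMap.continuous_det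
  obtain ⟨ε, hε, hpos⟩ : ∃ ε > 0, ∀ A : E →L[ℝ] E, ‖A‖ < ε →
      0 < (ContinuousLinearMap.id ℝ E + A).det := by
    have : ∀ᶠ A : E →L[ℝ] E in 𝓝 0, 0 < (ContinuousLinearMap.id ℝ E + A).det := by
      apply ContinuousAt.eventually_lt continuousAt_const
      · exact (hdetc.comp (continuous_const.add continuous_id)).continuousAt
      · simp [ContinuousLinearMap.det]
    obtain ⟨ε, hε, H⟩ := Metric.eventually_nhds_iff.1 this
    exact ⟨ε, hε, fun A hA => H (by simpa using hA)⟩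
  -- For small `t` the map `x + t g(x)` permutes the ball and has positive Jacobian there.
  have hvol : ∀ t : ℝ, 0 < t → t < 1 → t * C < 1 → t * C < ε →
      ∫ x in B, (ContinuousLinearMap.id ℝ E + t • fderiv ℝ g x).det = volume.real B := by
    intro t ht0 ht1 htC htε
    let f : E → E := fun x => x + t • g x
    have hfd : ∀ x, HasFDerivAt f (ContinuousLinearMap.id ℝ E + t • fderiv ℝ g x) x := fun x =>
      (hasFDerivAt_id x).add ((hgd x).hasFDerivAt.const_smul t)
    have hinj : InjOn f B := by
      intro x hx y hy hxy
      have h1 := hlip x y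
      rw [hin x (by simpa [B] using hx), hin y (by simpa [B] using hy)] at h1
      have h2 : y - x = - (t • (g y - g x)) := by
        have : x + t • g x = y + t • g y := hxy
        rw [smul_sub, neg_sub, sub_eq_sub_iff_add_eq_add, ← this]; abel
      have h3 : ‖y - x‖ ≤ t * C * ‖y - x‖ := by
        conv_lhs => rw [h2, norm_neg, norm_smul, Real.norm_of_nonneg ht0.le]
        rw [mul_assoc]
        exact mul_le_mul_of_nonneg_left h1 ht0.le
      have h4 : ‖y - x‖ = 0 := by nlinarith [norm_nonneg (y - x)]
      exact (sub_eq_zero.1 (norm_eq_zero.1 h4)).symm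
    have himg : f '' B = B := by
      apply Subset.antisymm
      · rintro _ ⟨x, hx, rfl⟩
        have : f x = (1 - t) • x + t • r x := by simp only [f, g]; module
        rw [this]
        exact hBconv hx (by simp [B, hnorm]) (by linarith) ht0.le (by ring)
      · -- Preimages of `y` are fixed points of the contraction `x ↦ y - t h(x)`. Such a fixed point
        -- cannot lie outside the ball, where `h = 0` would force `x = y`.
        intro y hy
        let K : NNReal := ⟨t * C, mul_nonneg ht0.le hC0⟩
        have hcon : ContractingWith K fun x => y - t • h x := by
          refine ⟨by exact_mod_cast htC, LipschitzWith.of_dist_le_mul fun a b => ?_⟩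
          rw [dist_eq_norm, dist_eq_norm, sub_sub_sub_cancel_left, ← smul_sub, norm_smul,
            Real.norm_of_nonneg ht0.le, norm_sub_rev a b]
          change _ ≤ t * C * _
          rw [mul_assoc]
          exact mul_le_mul_of_nonneg_left (hlip a b) ht0.le
        have hx : y - t • h (hcon.fixedPoint _) = hcon.fixedPoint _ := hcon.fixedPoint_isFixedPt
        set x := hcon.fixedPoint _
        have hxB : ‖x‖ ≤ R := by
          by_contra! hlt
          rw [hout x hlt.le, smul_zero, sub_zero] at hx
          rw [← hx] at hlt
          exact absurd (by simpa [B] using hy) hlt.not_ge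
        refine ⟨x, by simpa [B] using hxB, ?_⟩
        simp only [f]
        rw [← hin x hxB]
        exact (sub_eq_iff_eq_add.1 hx).symm
    have hcv := integral_image_eq_integral_abs_det_fderiv_smul volume hBc.measurableSet
      (fun x _ => (hfd x).hasFDerivWithinAt) hinj (fun _ => (1 : ℝ))
    rw [himg] at hcv
    simp only [smul_eq_mul, mul_one, integral_const, measureReal_restrict_apply_univ] at hcv
    rw [hcv]
    refine setIntegral_congr_fun hBc.measurableSet fun x hx => ?_
    refine (abs_of_pos (hpos _ ?_)).symm
    rw [norm_smul, Real.norm_of_nonneg ht0.le]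
    exact (mul_le_mul_of_nonneg_left (hC x hx) ht0.le).trans_lt htε
  -- At `t = 1` the Jacobian vanishes: `⟪r x, Dr(x) w⟫ = 0` for all `w`, so `r x ≠ 0` is not in the
  -- range of `Dr(x)`.
  have hzero : ∀ x, (ContinuousLinearMap.id ℝ E + fderiv ℝ g x).det = 0 := by
    intro x
    have hrx : ContinuousLinearMap.id ℝ E + fderiv ℝ g x = fderiv ℝ r x := by
      have : fderiv ℝ g x = fderiv ℝ r x - ContinuousLinearMap.id ℝ E := by
        have := ((hr.differentiable one_ne_zero x).hasFDerivAt.sub (hasFDerivAt_id x)).fderiv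
        exact this
      rw [this]; abel
    rw [hrx]
    by_contra hne
    obtain ⟨w, hw⟩ : ∃ w, fderiv ℝ r x w = r x := by
      have hu : IsUnit (fderiv ℝ r x : E →ₗ[ℝ] E) :=
        (LinearMap.isUnit_iff_isUnit_det _).2 (isUnit_iff_ne_zero.2 hne)
      exact ((Module.End.isUnit_iff _).1 hu).2 (r x)
    have hd := (hr.differentiable one_ne_zero x).hasFDerivAt
    have h1 := hd.norm_sq
    have h2 : HasFDerivAt (fun y => ‖r y‖ ^ 2) (0 : E →L[ℝ] ℝ) x := by
      simp only [hnorm]; exact hasFDerivAt_const _ _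
    have h3 := congrArg (fun L : E →L[ℝ] ℝ => L w) (h1.unique h2)
    simp [hw, hnorm, hR.ne'] at h3
  obtain ⟨δ, hδ, hδ1, hδC, hδε⟩ : ∃ δ > 0, δ < 1 ∧ δ * C < 1 ∧ δ * C < ε := by
    have hlim : Tendsto (fun δ : ℝ => δ * C) (𝓝[>] 0) (𝓝 0) := by
      have : Tendsto (fun δ : ℝ => δ * C) (𝓝 0) (𝓝 (0 * C)) :=
        (continuous_id.mul continuous_const).tendsto 0
      rw [zero_mul] at this
      exact this.mono_left nhdsWithin_le_nhds
    have h0 : Tendsto (fun δ : ℝ => δ) (𝓝[>] 0) (𝓝 0) := nhdsWithin_le_nhds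
    have := (eventually_mem_nhdsWithin (a := (0:ℝ)) (s := Ioi 0)).and
      ((h0.eventually_lt_const one_pos).and
      ((hlim.eventually_lt_const one_pos).and (hlim.eventually_lt_const hε)))
    obtain ⟨δ, h⟩ := this.exists
    exact ⟨δ, h⟩
  let v : ℕ → ℝ := fun i => δ / (i + 1)
  have hv : Function.Injective v := by
    intro i j hij
    simp only [v] at hij
    field_simp at hij
    exact_mod_cast (by linarith : (i : ℝ) = j)
  have hv0 : ∀ i, 0 < v i := fun i => by positivity
  have hvδ : ∀ i, v i ≤ δ := fun i => div_le_self hδ.le (by simp)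
  have hvC : ∀ i, v i * C ≤ δ * C := fun i => mul_le_mul_of_nonneg_right (hvδ i) hC0
  have hvolpos : 0 < volume.real B :=
    ENNReal.toReal_pos (measure_closedBall_pos _ _ hR).ne' hBc.measure_lt_top.ne
  have hsum : ∫ x in B, (ContinuousLinearMap.id ℝ E + fderiv ℝ g x).det = volume.real B := by
    rw [show (fun x => (ContinuousLinearMap.id ℝ E + fderiv ℝ g x).det) = _ from
      funext fun x => det_id_add_eq_sum v hv (fderiv ℝ g x)]
    rw [integral_finsetSum]
    · simp_rw [integral_mul_const]
      rw [Finset.sum_congr rfl fun i _ => by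
        rw [hvol (v i) (hv0 i) ((hvδ i).trans_lt hδ1) ((hvC i).trans_lt hδC)
          ((hvC i).trans_lt hδε)], ← Finset.mul_sum, ← Polynomial.eval_finsetSum,
        Lagrange.sum_basis hv.injOn ⟨0, by simp⟩]
      simp
    · intro i _
      refine Integrable.mul_const ?_ _
      have : Continuous fun x => (ContinuousLinearMap.id ℝ E + v i • fderiv ℝ g x).det :=
        hdetc.comp (by fun_prop)
      exact this.continuousOn.integrableOn_compact hBc
  simp only [hzero, integral_zero] at hsum
  exact hvolpos.ne hsum

open scoped Manifold ContDiff in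
/-- Brouwer's fixed point theorem, for a bounded continuous self-map of a Euclidean space. -/
theorem exists_fixedPoint_of_bounded {g : E → E} (hg : Continuous g) {M : ℝ}
    (hM : ∀ x, ‖g x‖ ≤ M) : ∃ x, g x = x := by
  by_contra! hne
  have hM0 : 0 ≤ M := (norm_nonneg _).trans (hM 0)
  -- A smooth approximation `k` of `g`, within the distance of `g x` to `x`, still has no fixed point.
  obtain ⟨k, hk⟩ := exists_contMDiffMap_forall_mem_convex_of_local_const (n := (⊤ : ℕ∞)) 𝓘(ℝ, E)
    (t := fun x => ball (g x) (min 1 ‖g x - x‖)) (fun x => convex_ball _ _) (fun x => by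
      refine ⟨g x, ?_⟩
      have hc : Continuous fun y => min 1 ‖g y - y‖ - dist (g x) (g y) := by fun_prop
      have h0 : 0 < min 1 ‖g x - x‖ - dist (g x) (g x) := by
        simp [sub_eq_zero, hne x]
      filter_upwards [hc.continuousAt.eventually_const_lt h0] with y hy
      rw [mem_ball]; linarith)
  have hks : ContDiff ℝ 1 k := (contMDiff_iff_contDiff.1 k.contMDiff).of_le (by simp)
  have hk1 : ∀ x, ‖k x‖ < M + 1 := fun x => by
    have h1 := (mem_ball_iff_norm.1 (hk x)).trans_le (min_le_left _ _)
    have h2 := norm_add_le (g x) (k x - g x)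
    rw [add_sub_cancel] at h2
    linarith [hM x]
  have hkne : ∀ x, k x ≠ x := fun x hx => by
    have h1 := (mem_ball_iff_norm.1 (hk x)).trans_le (min_le_right _ _)
    rw [hx, norm_sub_rev] at h1
    exact lt_irrefl _ h1
  let χ : ContDiffBump (0 : E) := ⟨M + 1, M + 2, by linarith, by linarith⟩
  let H : E → E := fun x => x - χ x • k x
  have hHs : ContDiff ℝ 1 H := contDiff_id.sub (χ.contDiff.smul hks)
  have hH0 : ∀ x, H x ≠ 0 := by
    intro x hx
    have hx : x = χ x • k x := sub_eq_zero.1 hx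
    have hxn : ‖x‖ ≤ M + 1 := by
      have : ‖x‖ ≤ 1 * ‖k x‖ := by
        conv_lhs => rw [hx, norm_smul, Real.norm_of_nonneg χ.nonneg]
        exact mul_le_mul_of_nonneg_right χ.le_one (norm_nonneg _)
      linarith [hk1 x]
    rw [χ.one_of_mem_closedBall (by simpa [χ] using hxn), one_smul] at hx
    exact hkne x hx.symm
  -- The cutoff vanishes at distance `M + 2`, so `H` is the identity on the sphere of that radius.
  have hR : 0 < M + 2 := by linarith
  refine no_smooth_retraction hR (r := fun x => ((M + 2) * ‖H x‖⁻¹) • H x) ?_ ?_ ?_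
  · exact (contDiff_const.mul ((hHs.norm ℝ hH0).inv fun x => norm_ne_zero_iff.2 (hH0 x))).smul hHs
  · intro x
    rw [norm_smul, norm_mul, norm_inv, norm_norm, Real.norm_of_nonneg hR.le, mul_assoc,
      inv_mul_cancel₀ (norm_ne_zero_iff.2 (hH0 x)), mul_one]
  · intro x hx
    have : H x = x := by
      simp only [H]
      rw [χ.zero_of_le_dist (by simp [χ, hx]), zero_smul, sub_zero]
    simp only [this, hx]
    rw [mul_inv_cancel₀ hR.ne', one_smul]
end

open unitInterval in
/-- The Hilbert cube has the fixed point property. -/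
theorem hilbertCube_fixedPoint (f : (ℕ → I) → (ℕ → I)) (hf : Continuous f) : ∃ x, f x = x := by
  let S : ℕ → Set (ℕ → I) := fun n => {x | ∀ i < n, f x i = x i}
  have hcl : ∀ n, IsClosed (S n) := fun n => by
    simp only [S, ofPred_forall]
    exact isClosed_iInter fun i => isClosed_iInter fun _ =>
      isClosed_eq ((continuous_apply i).comp hf) (continuous_apply i)
  have hne : ∀ n, (S n).Nonempty := by
    intro n
    -- `j` clamps each of the `n` coordinates to `[0, 1]` and pads with zeros; `p` truncates.
    let j : EuclideanSpace ℝ (Fin n) → (ℕ → I) := fun y i =>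
      if hi : i < n then projIcc 0 1 zero_le_one (y ⟨i, hi⟩) else 0
    have hj : Continuous j := continuous_pi fun i => by
      by_cases hi : i < n
      · simp only [j, hi, dite_true]
        exact continuous_projIcc.comp (by fun_prop)
      · simp only [j, hi, dite_false]; exact continuous_const
    let p : (ℕ → I) → EuclideanSpace ℝ (Fin n) := fun x => WithLp.toLp 2 fun i => (x i : ℝ)
    have hp : Continuous p := by
      refine (PiLp.continuous_toLp 2 _).comp (continuous_pi fun i => ?_)
      exact continuous_subtype_val.comp (continuous_apply _)
    obtain ⟨M, hM⟩ := (isCompact_range hp).isBounded.exists_norm_le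
    obtain ⟨y, hy⟩ := exists_fixedPoint_of_bounded (g := fun y => p (f (j y)))
      (hp.comp (hf.comp hj)) (M := M) (fun x => hM _ (mem_range_self _))
    refine ⟨j y, fun i hi => ?_⟩
    have h1 : ((f (j y) i : I) : ℝ) = y ⟨i, hi⟩ := congrArg (fun z => z ⟨i, hi⟩) hy
    simp only [j, hi, dite_true]
    change f (j y) i = _
    rw [← h1, projIcc_val]
  obtain ⟨x, hx⟩ := IsCompact.nonempty_iInter_of_sequence_nonempty_isCompact_isClosed S
    (fun n x hx i hi => hx i (hi.trans n.lt_succ_self)) hne (hcl 0).isCompact hcl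
  exact ⟨x, funext fun i => mem_iInter.1 hx (i + 1) i i.lt_succ_self⟩

/-- **Generalized Schauder theorem: any compact self-map of an absolute retract
has a fixed point.** -/
theorem generalized_schauder_fixed_point
    {Z : Type*} [TopologicalSpace Z] (hAR : IsAbsoluteRetract Z)
    (φ : Z → Z) (hφ_cont : Continuous φ)
    (hφ_comp : IsCompact (closure (Set.range φ))) :
    ∃ x : Z, φ x = x := by
  obtain ⟨hmet, hext⟩ := hAR
  let _ : MetricSpace Z := TopologicalSpace.metrizableSpaceMetric Z
  set K : Set Z := closure (range φ)
  have _ : CompactSpace K := isCompact_iff_compactSpace.1 hφ_comp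
  obtain ⟨F, hF⟩ := PiNatEmbed.exists_embedding_to_hilbert_cube (X := K)
  let e : K → ULift (ℕ → unitInterval) := fun z => ULift.up (F z)
  have hec : IsClosedEmbedding e :=
    (Homeomorph.ulift.symm.isClosedEmbedding).comp (hF.continuous.isClosedEmbedding hF.injective)
  let _ : MetricSpace (ULift (ℕ → unitInterval)) :=
    @TopologicalSpace.metrizableSpaceMetric _ _ Homeomorph.ulift.isEmbedding.metrizableSpace
  let E := hec.isEmbedding.toHomeomorph
  obtain ⟨g, hg, hgext⟩ := hext (ULift (ℕ → unitInterval)) (range e) hec.isClosed_range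
    (fun m => (E.symm m : Z)) (continuous_subtype_val.comp E.symm.continuous)
  have hφK : ∀ z, φ z ∈ K := fun z => subset_closure (mem_range_self z)
  obtain ⟨q, hq⟩ := hilbertCube_fixedPoint (fun q => F ⟨φ (g (ULift.up q)), hφK _⟩)
    (hF.continuous.comp (Continuous.subtype_mk
      (hφ_cont.comp (hg.comp Homeomorph.ulift.symm.continuous)) _))
  refine ⟨g (ULift.up q), ?_⟩
  set k : K := ⟨φ (g (ULift.up q)), hφK _⟩
  have h1 := hgext ⟨e k, mem_range_self k⟩
  have h2 : E.symm ⟨e k, mem_range_self k⟩ = k := E.symm_apply_apply k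
  have h3 : e k = ULift.up q := congrArg ULift.up hq
  rw [h2] at h1
  simp only [h3] at h1
  exact h1.symm
end
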